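/- arXiv:1610.00570 — 3 statements merged into one kernel-verified Lean document; each statement's English description precedes it below -/
import Mathlib

section
/- If R is a relative m-ovoid of Q⁻(2n+1,q) with respect to 𝒬 with 0 < m < q^{n−1} (a proper relative m-ovoid), then q is even and 2m = q^{n−1}; in particular |R| equals the number of singular points outside H not belonging to R, i.e. R is a relative hemisystem. -/
noncomputable section

open Module

variable {F V : Type*} [Field F] [AddCommGroup V] [Module F V]

/-- `P` is a singular point of the quadratic form `Q`, i.e. a `1`-dimensional subspace
spanned by a nonzero singular vector. -/
def IsSingularPoint (Q : QuadraticForm F V) (P : Submodule F V) : Prop :=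
  ∃ v : V, v ≠ 0 ∧ Q v = 0 ∧ P = Submodule.span F {v}

/-- A subspace is totally singular if `Q` vanishes identically on it. -/
def TotallySingular (Q : QuadraticForm F V) (W : Submodule F V) : Prop :=
  ∀ v ∈ W, Q v = 0

/-- A generator is a totally singular subspace of (vector space) dimension `n`. -/
def IsGenerator (Q : QuadraticForm F V) (n : ℕ) (g : Submodule F V) : Prop :=
  TotallySingular Q g ∧ finrank F g = n

/-- The restriction of `Q` to the subspace `U` is nondegenerate. -/
def NondegOn (Q : QuadraticForm F V) (U : Submodule F V) : Prop :=
  ∀ v ∈ U, Q v = 0 → (∀ w ∈ U, QuadraticMap.polar (⇑Q) v w = 0) → v = 0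

/-- The quadratic form `Q` is nondegenerate. -/
def Nondeg (Q : QuadraticForm F V) : Prop :=
  ∀ v : V, Q v = 0 → (∀ w : V, QuadraticMap.polar (⇑Q) v w = 0) → v = 0

/-- `Q` has Witt index `n`: every totally singular subspace has dimension at most `n`
and some totally singular subspace has dimension `n`. -/
def HasWittIndex (Q : QuadraticForm F V) (n : ℕ) : Prop :=
  (∀ W : Submodule F V, TotallySingular Q W → finrank F W ≤ n) ∧
  ∃ W : Submodule F V, TotallySingular Q W ∧ finrank F W = n

/-- A relative `m`-ovoid with respect to the parabolic section cut out by the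
hyperplane `H`: a set `R` of singular points not contained in `H` such that every
generator not contained in `H` contains exactly `m` points of `R`. -/
def IsRelativeMOvoid (Q : QuadraticForm F V) (n : ℕ) (H : Submodule F V) (m : ℕ)
    (R : Set (Submodule F V)) : Prop :=
  (∀ P ∈ R, IsSingularPoint Q P ∧ ¬ P ≤ H) ∧
  ∀ g : Submodule F V, IsGenerator Q n g → ¬ g ≤ H → {P ∈ R | P ≤ g}.ncard = m


abbrev perp (Q : QuadraticForm F V) (U : Submodule F V) : Submodule F V :=
  LinearMap.BilinForm.orthogonal (QuadraticMap.polarBilin Q) U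

theorem mem_perp (Q : QuadraticForm F V) (U : Submodule F V) (x : V) :
    x ∈ perp Q U ↔ ∀ u ∈ U, QuadraticMap.polar Q u x = 0 := Iff.rfl

theorem polar_refl (Q : QuadraticForm F V) :
    (QuadraticMap.polarBilin Q : LinearMap.BilinForm F V).IsRefl := by
  intro x y h
  simp only [QuadraticMap.polarBilin_apply_apply] at *
  rw [QuadraticMap.polar_comm]; exact h

theorem Q_add (Q : QuadraticForm F V) (x y : V) :
    Q (x + y) = Q x + Q y + QuadraticMap.polar Q x y := QuadraticMap.map_add _ _ _

theorem ts_polar {Q : QuadraticForm F V} {U : Submodule F V} (hU : TotallySingular Q U)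
    {x y : V} (hx : x ∈ U) (hy : y ∈ U) : QuadraticMap.polar Q x y = 0 := by
  simp [QuadraticMap.polar, hU _ hx, hU _ hy, hU _ (U.add_mem hx hy)]

theorem ts_le_perp {Q : QuadraticForm F V} {U : Submodule F V} (hU : TotallySingular Q U) :
    U ≤ perp Q U := fun _ hx _ hu => ts_polar hU hu hx

theorem ts_sup' {Q : QuadraticForm F V} {U W : Submodule F V} (hU : TotallySingular Q U)
    (hW : TotallySingular Q W) (h : W ≤ perp Q U) : TotallySingular Q (U ⊔ W) := by
  intro v hv
  obtain ⟨u, hu, w, hw, rfl⟩ := Submodule.mem_sup.1 hv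
  have := (mem_perp Q U w).1 (h hw) u hu
  rw [Q_add, hU u hu, hW w hw, this]; simp

theorem ts_span {Q : QuadraticForm F V} {e : V} (he : Q e = 0) :
    TotallySingular Q (Submodule.span F {e}) := by
  intro v hv
  obtain ⟨c, rfl⟩ := Submodule.mem_span_singleton.1 hv
  rw [QuadraticMap.map_smul, he]; simp

theorem ts_sup {Q : QuadraticForm F V} {U : Submodule F V} {e : V} (hU : TotallySingular Q U)
    (he : Q e = 0) (h : e ∈ perp Q U) : TotallySingular Q (U ⊔ Submodule.span F {e}) :=
  ts_sup' hU (ts_span he) (by rwa [Submodule.span_singleton_le_iff_mem])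

theorem mem_perp_sup_span (Q : QuadraticForm F V) (U : Submodule F V) (e x : V) :
    x ∈ perp Q (U ⊔ Submodule.span F {e}) ↔ x ∈ perp Q U ∧ QuadraticMap.polar Q e x = 0 := by
  constructor
  · intro h
    exact ⟨fun u hu => h u (Submodule.mem_sup_left hu),
      h e (Submodule.mem_sup_right (Submodule.mem_span_singleton_self e))⟩
  · rintro ⟨h1, h2⟩
    rw [mem_perp]
    intro v hv
    obtain ⟨u, hu, w, hw, rfl⟩ := Submodule.mem_sup.1 hv
    obtain ⟨c, rfl⟩ := Submodule.mem_span_singleton.1 hw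
    rw [QuadraticMap.polar_add_left, QuadraticMap.polar_smul_left, h2, (mem_perp Q U x).1 h1 u hu]
    simp

theorem mem_perp_span (Q : QuadraticForm F V) (e x : V) :
    x ∈ perp Q (Submodule.span F {e}) ↔ QuadraticMap.polar Q e x = 0 := by
  have := mem_perp_sup_span Q ⊥ e x
  rw [bot_sup_eq] at this
  rw [this]
  simp [perp]

theorem gen_perp [FiniteDimensional F V] {Q : QuadraticForm F V} {n : ℕ} (hQw : HasWittIndex Q n)
    {g : Submodule F V} (hg : IsGenerator Q n g) {x : V} (hx : Q x = 0) (h : x ∈ perp Q g) :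
    x ∈ g := by
  by_contra hc
  have h1 := hQw.1 _ (ts_sup hg.1 hx h)
  rw [Submodule.finrank_sup_span_singleton hc, hg.2] at h1
  omega

theorem polar_nondeg [Fintype F] [FiniteDimensional F V] {Q : QuadraticForm F V} {n : ℕ}
    (hV : finrank F V = 2 * n + 2)
    (hQnd : Nondeg Q) (hQw : HasWittIndex Q n) (r : V)
    (hr : ∀ w, QuadraticMap.polar Q r w = 0) : r = 0 := by
  by_contra hr0
  have hQr : Q r ≠ 0 := fun h => hr0 (hQnd r h hr)
  have h2 : (2 : F) = 0 := by
    have := hr r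
    rw [QuadraticMap.polar_self, two_nsmul, ← two_mul] at this
    exact (mul_eq_zero.1 this).resolve_right hQr
  obtain ⟨g, hg, hgn⟩ := hQw.2
  have h3 := LinearMap.BilinForm.finrank_add_finrank_orthogonal (polar_refl Q) g
  have hrg : r ∉ g := fun h => hQr (hg r h)
  have h4 := Submodule.finrank_sup_span_singleton hrg
  have : ¬ (perp Q g ≤ g ⊔ Submodule.span F {r}) := by
    intro h
    have := Submodule.finrank_mono h
    simp only [perp] at this
    omega
  obtain ⟨y, hy, hyn⟩ := SetLike.not_le_iff_exists.1 this
  have : CharP F 2 := by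
    refine CharTwo.of_one_ne_zero_of_two_eq_zero one_ne_zero h2
  obtain ⟨a, ha⟩ := FiniteField.isSquare_of_char_two (F := F) (ringChar.eq F 2) (Q y / Q r)
  apply hyn
  have h5 : y - a • r ∈ g := by
    refine gen_perp hQw ⟨hg, hgn⟩ ?_ ?_
    · rw [sub_eq_add_neg, Q_add, QuadraticMap.map_neg, QuadraticMap.map_smul,
        QuadraticMap.polar_neg_right, QuadraticMap.polar_smul_right, QuadraticMap.polar_comm, hr,
        smul_eq_mul, ← ha]
      field_simp
      linear_combination (Q y) * h2
    · refine Submodule.sub_mem _ hy (Submodule.smul_mem _ _ ?_)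
      intro u hu
      rw [QuadraticMap.polarBilin_apply_apply, QuadraticMap.polar_comm, hr]
  have : y = (y - a • r) + a • r := by simp
  rw [this]
  exact Submodule.add_mem_sup h5 (Submodule.smul_mem _ _ (Submodule.mem_span_singleton_self r))

def PND (Q : QuadraticForm F V) : Prop := ∀ r, (∀ w, QuadraticMap.polar Q r w = 0) → r = 0

theorem pnd_nondeg {Q : QuadraticForm F V} (h : PND Q) :
    (QuadraticMap.polarBilin Q : LinearMap.BilinForm F V).Nondegenerate := by
  refine ⟨fun x hx => h x hx, fun x hx => h x fun w => ?_⟩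
  rw [QuadraticMap.polar_comm]; exact hx w

theorem finrank_perp [FiniteDimensional F V] {Q : QuadraticForm F V} (h : PND Q)
    (U : Submodule F V) : finrank F (perp Q U) + finrank F U = finrank F V := by
  have := LinearMap.BilinForm.finrank_orthogonal (pnd_nondeg h) U
  have := Submodule.finrank_le U
  simp only [perp]
  omega

theorem extend_gen [FiniteDimensional F V] {Q : QuadraticForm F V} {n : ℕ}
    (hV : finrank F V = 2 * n + 2) (h : PND Q) (hQw : HasWittIndex Q n)
    {U : Submodule F V} (hU : TotallySingular Q U) :
    ∃ g, IsGenerator Q n g ∧ U ≤ g := by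
  obtain ⟨W, hW, hWn⟩ := hQw.2
  have hts : TotallySingular Q (U ⊔ (perp Q U ⊓ W)) :=
    ts_sup' hU (fun v hv => hW v hv.2) inf_le_left
  refine ⟨_, ⟨hts, le_antisymm (hQw.1 _ hts) ?_⟩, le_sup_left⟩
  have e1 : U ⊓ perp Q W = U ⊓ W := by
    refine le_antisymm (fun x hx => ⟨hx.1, gen_perp hQw ⟨hW, hWn⟩ (hU x hx.1) hx.2⟩)
      (inf_le_inf_left _ (ts_le_perp hW))
  have e2 : perp Q (U ⊔ perp Q W) ≤ perp Q U ⊓ W := by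
    refine le_inf (LinearMap.BilinForm.orthogonal_le le_sup_left) ?_
    refine (LinearMap.BilinForm.orthogonal_le le_sup_right).trans ?_
    exact (LinearMap.BilinForm.orthogonal_orthogonal (pnd_nondeg h) (polar_refl Q) W).le
  have e3 : U ⊓ (perp Q U ⊓ W) ≤ U ⊓ W := inf_le_inf_left _ inf_le_right
  have d1 := finrank_perp h W
  have d2 := finrank_perp h (U ⊔ perp Q W)
  have d3 := Submodule.finrank_sup_add_finrank_inf_eq U (perp Q W)
  have d4 := Submodule.finrank_sup_add_finrank_inf_eq U (perp Q U ⊓ W)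
  have d5 := Submodule.finrank_mono e2
  have d6 := Submodule.finrank_mono e3
  rw [e1] at d3
  omega

theorem exists_N [FiniteDimensional F V] {Q : QuadraticForm F V} (h : PND Q)
    {H : Submodule F V} (hH : finrank F H + 1 = finrank F V) (hHnd : NondegOn Q H) :
    ∃ N : V, Q N ≠ 0 ∧ ∀ x, x ∈ H ↔ QuadraticMap.polar Q x N = 0 := by
  have d := finrank_perp h H
  have : perp Q H ≠ ⊥ := by
    intro hb
    rw [hb, finrank_bot] at d; omega
  obtain ⟨N, hN, hN0⟩ := Submodule.exists_mem_ne_zero_of_ne_bot this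
  have hle : H ≤ perp Q (Submodule.span F {N}) := by
    intro x hx u hu
    obtain ⟨c, rfl⟩ := Submodule.mem_span_singleton.1 hu
    have := hN x hx
    rw [QuadraticMap.polarBilin_apply_apply] at *
    rw [QuadraticMap.polar_comm, QuadraticMap.polar_smul_right, this, smul_zero]
  have d2 := finrank_perp h (Submodule.span F {N})
  rw [finrank_span_singleton hN0] at d2
  have heq := Submodule.eq_of_le_of_finrank_eq hle (by omega)
  have hmem : ∀ x, x ∈ H ↔ QuadraticMap.polar Q x N = 0 := by
    intro x
    constructor
    · intro hx; exact hN x hx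
    · intro hx
      rw [heq]
      intro u hu
      obtain ⟨c, rfl⟩ := Submodule.mem_span_singleton.1 hu
      rw [QuadraticMap.polarBilin_apply_apply]
      rw [QuadraticMap.polar_comm, QuadraticMap.polar_smul_right, hx, smul_zero]
  refine ⟨N, fun h0 => hN0 ?_, hmem⟩
  refine hHnd N ((hmem N).2 ?_) h0 ?_
  · rw [QuadraticMap.polar_self, h0]; simp
  · intro w hw
    rw [QuadraticMap.polar_comm]; exact (hmem w).1 hw

open Classical in
def ind (p : Prop) : ℝ := if p then 1 else 0

theorem ind_pos {p : Prop} (h : p) : ind p = 1 := if_pos h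
theorem ind_neg {p : Prop} (h : ¬ p) : ind p = 0 := if_neg h

theorem ind_congr {p r : Prop} (h : p ↔ r) : ind p = ind r := by rw [propext h]

theorem ind_and (p r : Prop) : ind (p ∧ r) = ind p * ind r := by
  unfold ind; by_cases p <;> by_cases r <;> simp [*]

theorem sum_ind_unique {ι : Type*} [Fintype ι] {p : ι → Prop} (a : ι) (h : ∀ i, p i ↔ i = a) :
    ∑ i, ind (p i) = 1 := by
  rw [Finset.sum_eq_single a]
  · exact ind_pos ((h a).2 rfl)
  · intro b _ hb; exact ind_neg fun hp => hb ((h b).1 hp)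
  · simp

theorem sum_ind_mem [Fintype F] [Fintype V] (U : Submodule F V) :
    ∑ y : V, ind (y ∈ U) = (Fintype.card F : ℝ) ^ finrank F U := by
  classical
  unfold ind
  rw [Finset.sum_boole]
  have := Module.card_eq_pow_finrank (K := F) (V := U)
  rw [Fintype.card_subtype] at this
  rw [this]; push_cast; rfl

def XX [Fintype V] (Q : QuadraticForm F V) (f : V → ℝ) (U : Submodule F V) : ℝ :=
  ∑ u, ind (u ∈ perp Q U) * f u

def SS [Fintype V] (f : V → ℝ) (U : Submodule F V) : ℝ :=
  ∑ u, ind (u ∈ U) * f u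

theorem step_perp [Fintype F] (Q : QuadraticForm F V) (U : Submodule F V) (e1 e2 u : V) :
    ∑ b : F, ind (u ∈ perp Q (U ⊔ Submodule.span F {e1 + b • e2})) +
      ind (u ∈ perp Q (U ⊔ Submodule.span F {e2})) =
    ind (u ∈ perp Q U) + Fintype.card F *
      ind (u ∈ perp Q (U ⊔ Submodule.span F {e1} ⊔ Submodule.span F {e2})) := by
  simp only [mem_perp_sup_span, QuadraticMap.polar_add_left, QuadraticMap.polar_smul_left,
    smul_eq_mul]
  by_cases hu : u ∈ perp Q U
  swap
  · simp [hu, ind]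
  simp only [hu, true_and]
  generalize QuadraticMap.polar Q e1 u = α
  generalize QuadraticMap.polar Q e2 u = β
  by_cases hb : β = 0
  · subst hb
    by_cases ha : α = 0
    · simp [ha, ind]; ring
    · simp [ha, ind]
  · rw [sum_ind_unique (-α / β)]
    · simp [hb, ind]
    · intro i
      rw [eq_div_iff hb]
      constructor
      · intro h; linear_combination h
      · intro h; linear_combination h

theorem step_mem [Fintype F] (U : Submodule F V) (e1 e2 u : V)
    (hi : ∀ α β : F, α • e1 + β • e2 ∈ U → α = 0 ∧ β = 0) :
    ∑ b : F, ind (u ∈ U ⊔ Submodule.span F {e1 + b • e2}) +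
      ind (u ∈ U ⊔ Submodule.span F {e2}) =
    Fintype.card F * ind (u ∈ U) +
      ind (u ∈ U ⊔ Submodule.span F {e1} ⊔ Submodule.span F {e2}) := by
  have hms : ∀ e x : V, x ∈ U ⊔ Submodule.span F {e} ↔ ∃ c : F, x - c • e ∈ U := by
    intro e x
    constructor
    · intro h
      obtain ⟨u, hu, w, hw, rfl⟩ := Submodule.mem_sup.1 h
      obtain ⟨c, rfl⟩ := Submodule.mem_span_singleton.1 hw
      exact ⟨c, by simpa using hu⟩
    · rintro ⟨c, hc⟩
      have : x = (x - c • e) + c • e := by simp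
      rw [this]
      exact Submodule.add_mem_sup hc (Submodule.smul_mem _ _ (Submodule.mem_span_singleton_self e))
  by_cases hL : u ∈ U ⊔ Submodule.span F {e1} ⊔ Submodule.span F {e2}
  · obtain ⟨z, hz, y, hy, rfl⟩ := Submodule.mem_sup.1 hL
    obtain ⟨w, hw, x, hx, rfl⟩ := Submodule.mem_sup.1 hz
    obtain ⟨a, rfl⟩ := Submodule.mem_span_singleton.1 hx
    obtain ⟨b, rfl⟩ := Submodule.mem_span_singleton.1 hy
    rw [ind_pos hL]
    have k1 : ∀ c : F, w + a • e1 + b • e2 ∈ U ⊔ Submodule.span F {e1 + c • e2} ↔ b = a * c := by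
      intro c
      rw [hms]
      constructor
      · rintro ⟨d, hd⟩
        have : (a - d) • e1 + (b - d * c) • e2 ∈ U := by
          convert! U.sub_mem hd hw using 1
          module
        obtain ⟨h1, h2⟩ := hi _ _ this
        linear_combination h2 - c * h1
      · rintro rfl
        refine ⟨a, ?_⟩
        convert! hw using 1
        module
    have k2 : w + a • e1 + b • e2 ∈ U ⊔ Submodule.span F {e2} ↔ a = 0 := by
      rw [hms]
      constructor
      · rintro ⟨d, hd⟩
        refine (hi a (b - d) ?_).1
        convert! U.sub_mem hd hw using 1
        module
      · rintro rfl
        refine ⟨b, ?_⟩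
        convert! hw using 1
        module
    have k3 : w + a • e1 + b • e2 ∈ U ↔ a = 0 ∧ b = 0 := by
      constructor
      · intro hd
        refine (hi a b ?_)
        convert! U.sub_mem hd hw using 1
        module
      · rintro ⟨rfl, rfl⟩
        convert! hw using 1
        module
    simp only [k1, k2, k3]
    by_cases ha : a = 0
    · by_cases hb : b = 0
      · simp [ha, hb, ind]
      · simp [ha, hb, ind]
    · rw [sum_ind_unique (b / a)]
      · simp [ha, ind]
      · intro i
        rw [eq_div_iff ha]
        constructor
        · intro h; linear_combination -h
        · intro h; linear_combination -h
  · have l0 : U ≤ U ⊔ Submodule.span F {e1} ⊔ Submodule.span F {e2} :=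
      le_sup_left.trans le_sup_left
    have l1 : e1 ∈ U ⊔ Submodule.span F {e1} ⊔ Submodule.span F {e2} :=
      Submodule.mem_sup_left (Submodule.mem_sup_right (Submodule.mem_span_singleton_self e1))
    have l2 : e2 ∈ U ⊔ Submodule.span F {e1} ⊔ Submodule.span F {e2} :=
      (Submodule.mem_sup_right (Submodule.mem_span_singleton_self e2))
    have h0 : ∀ e ∈ U ⊔ Submodule.span F {e1} ⊔ Submodule.span F {e2},
        u ∉ U ⊔ Submodule.span F {e} := by
      intro e he hu
      exact hL ((sup_le l0 (by rwa [Submodule.span_singleton_le_iff_mem]) :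
        U ⊔ Submodule.span F {e} ≤ _) hu)
    rw [ind_neg hL, ind_neg (fun h => hL (l0 h)), ind_neg (h0 _ l2), Finset.sum_eq_zero]
    · simp
    · intro b _
      exact ind_neg (h0 _ (Submodule.add_mem _ l1 (Submodule.smul_mem _ _ l2)))

theorem step [Fintype F] [Fintype V] (Q : QuadraticForm F V) (f : V → ℝ) (U : Submodule F V)
    (e1 e2 : V) (hi : ∀ α β : F, α • e1 + β • e2 ∈ U → α = 0 ∧ β = 0) (c : ℝ)
    (h1 : ∀ b : F, XX Q f (U ⊔ Submodule.span F {e1 + b • e2}) =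
      - (Fintype.card F * c) * SS f (U ⊔ Submodule.span F {e1 + b • e2}))
    (h2 : XX Q f (U ⊔ Submodule.span F {e2}) =
      - (Fintype.card F * c) * SS f (U ⊔ Submodule.span F {e2}))
    (h3 : XX Q f (U ⊔ Submodule.span F {e1} ⊔ Submodule.span F {e2}) =
      - c * SS f (U ⊔ Submodule.span F {e1} ⊔ Submodule.span F {e2})) :
    XX Q f U = - (Fintype.card F * (Fintype.card F * c)) * SS f U := by
  have hX : ∑ b : F, XX Q f (U ⊔ Submodule.span F {e1 + b • e2}) +
      XX Q f (U ⊔ Submodule.span F {e2}) = XX Q f U + Fintype.card F *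
      XX Q f (U ⊔ Submodule.span F {e1} ⊔ Submodule.span F {e2}) := by
    unfold XX
    rw [Finset.sum_comm, Finset.mul_sum, ← Finset.sum_add_distrib, ← Finset.sum_add_distrib]
    refine Finset.sum_congr rfl fun u _ => ?_
    rw [← Finset.sum_mul]
    linear_combination (f u) * step_perp Q U e1 e2 u
  have hS : ∑ b : F, SS f (U ⊔ Submodule.span F {e1 + b • e2}) +
      SS f (U ⊔ Submodule.span F {e2}) = Fintype.card F * SS f U +
      SS f (U ⊔ Submodule.span F {e1} ⊔ Submodule.span F {e2}) := by
    unfold SS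
    rw [Finset.sum_comm, Finset.mul_sum, ← Finset.sum_add_distrib, ← Finset.sum_add_distrib]
    refine Finset.sum_congr rfl fun u _ => ?_
    rw [← Finset.sum_mul]
    linear_combination (f u) * step_mem U e1 e2 u hi
  rw [Finset.sum_congr rfl fun b _ => h1 b, ← Finset.mul_sum, h2, h3] at hX
  linear_combination -hX - (Fintype.card F * c) * hS

theorem count_sing [Fintype F] [Fintype V] {Q : QuadraticForm F V} {k : ℕ}
    (hV : finrank F V = 2 * (k + 1) + 2) (h : PND Q) (hQw : HasWittIndex Q (k + 1))
    {U : Submodule F V} (hU : TotallySingular Q U) (hk : finrank F U = k) :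
    ∑ y, ind (y ∈ perp Q U ∧ Q y = 0) = (Fintype.card F : ℝ) ^ (k + 1)
      + (Fintype.card F : ℝ) ^ (k + 3) - (Fintype.card F : ℝ) ^ (k + 2) := by
  set q : ℝ := ((Fintype.card F : ℕ) : ℝ) with hq
  have hq0 : q ≠ 0 := by
    rw [hq]; exact_mod_cast Fintype.card_ne_zero
  obtain ⟨g, hg, hUg⟩ := extend_gen hV h hQw hU
  have : ¬ g ≤ U := fun hle => by
    have := Submodule.finrank_mono hle
    have := hg.2
    omega
  obtain ⟨e, heg, heU⟩ := SetLike.not_le_iff_exists.1 this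
  have hge : U ⊔ Submodule.span F {e} = g := by
    apply Submodule.eq_of_le_of_finrank_eq
    · exact sup_le hUg (by rwa [Submodule.span_singleton_le_iff_mem])
    · rw [Submodule.finrank_sup_span_singleton heU, hg.2, hk]
  have heQ : Q e = 0 := hg.1 e heg
  have hep : e ∈ perp Q U := fun u hu => ts_polar hg.1 (hUg hu) heg
  have hee : QuadraticMap.polar Q e e = 0 := ts_polar hg.1 heg heg
  have hpg : ∀ y, y ∈ perp Q g ↔ y ∈ perp Q U ∧ QuadraticMap.polar Q e y = 0 := by
    intro y; rw [← hge]; exact mem_perp_sup_span Q U e y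
  -- first part
  have a1 : ∑ y, ind (y ∈ perp Q g ∧ Q y = 0) = q ^ (k + 1) := by
    rw [← hg.2, hq, ← sum_ind_mem g]
    refine Finset.sum_congr rfl fun y _ => ind_congr ?_
    exact ⟨fun hy => gen_perp hQw hg hy.2 hy.1, fun hy => ⟨ts_le_perp hg.1 hy, hg.1 y hy⟩⟩
  set I : V → ℝ := fun y => ind (y ∈ perp Q U ∧ QuadraticMap.polar Q e y ≠ 0) with hI
  have a2 : ∑ y, I y = q ^ (k + 4) - q ^ (k + 3) := by
    have d1 := finrank_perp h U
    have d2 := finrank_perp h g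
    have b1 := sum_ind_mem (perp Q U)
    have b2 := sum_ind_mem (perp Q g)
    rw [show finrank F (perp Q U) = k + 4 by omega] at b1
    rw [show finrank F (perp Q g) = k + 3 by have := hg.2; omega] at b2
    rw [hq, ← b1, ← b2, ← Finset.sum_sub_distrib]
    refine Finset.sum_congr rfl fun y _ => ?_
    rw [ind_congr (hpg y), hI]
    by_cases c1 : y ∈ perp Q U <;> by_cases c2 : QuadraticMap.polar Q e y = 0 <;>
      simp [ind, c1, c2]
  have a3 : ∑ y, I y = q * ∑ y, I y * ind (Q y = 0) := by
    have s1 : ∀ y, I y = ∑ t : F, I y * ind (Q (y + t • e) = 0) := by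
      intro y
      rw [← Finset.mul_sum]
      by_cases c : QuadraticMap.polar Q e y = 0
      · have : I y = 0 := ind_neg (by simp [c])
        rw [this]; simp
      · rw [sum_ind_unique (- Q y / QuadraticMap.polar Q e y), mul_one]
        intro t
        rw [Q_add, QuadraticMap.map_smul, heQ, QuadraticMap.polar_smul_right,
          QuadraticMap.polar_comm, eq_div_iff c, smul_eq_mul, smul_eq_mul]
        constructor
        · intro h; linear_combination h
        · intro h; linear_combination h
    rw [Finset.sum_congr rfl fun y _ => s1 y, Finset.sum_comm]
    have s2 : ∀ t : F, ∑ y, I y * ind (Q (y + t • e) = 0) = ∑ y, I y * ind (Q y = 0) := by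
      intro t
      rw [← Equiv.sum_comp (Equiv.addRight (t • e)) (fun y => I y * ind (Q y = 0))]
      refine Finset.sum_congr rfl fun y _ => ?_
      congr 1
      simp only [hI, Equiv.coe_addRight]
      apply ind_congr
      rw [QuadraticMap.polar_add_right, QuadraticMap.polar_smul_right, hee, smul_zero, add_zero,
        Submodule.add_mem_iff_left _ (Submodule.smul_mem _ _ hep)]
    rw [Finset.sum_congr rfl fun t _ => s2 t]
    simp [hq]
  have a4 : ∑ y, ind (y ∈ perp Q U ∧ Q y = 0) = ∑ y, ind (y ∈ perp Q g ∧ Q y = 0) +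
      ∑ y, I y * ind (Q y = 0) := by
    rw [← Finset.sum_add_distrib]
    refine Finset.sum_congr rfl fun y _ => ?_
    rw [ind_and, ind_and, ind_congr (hpg y), hI]
    by_cases c1 : y ∈ perp Q U <;> by_cases c2 : QuadraticMap.polar Q e y = 0 <;>
      simp [ind, c1, c2]
  have a5 : ∑ y, I y * ind (Q y = 0) = q ^ (k + 3) - q ^ (k + 2) := by
    apply mul_left_cancel₀ hq0
    rw [← a3, a2]; ring
  rw [a4, a1, a5]; ring

theorem base [Fintype F] [Fintype V] {Q : QuadraticForm F V} {k : ℕ}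
    (hV : finrank F V = 2 * (k + 1) + 2) (h : PND Q) (hQw : HasWittIndex Q (k + 1))
    (f : V → ℝ) (hf : ∀ x, f x ≠ 0 → Q x = 0)
    (hg : ∀ g, IsGenerator Q (k + 1) g → SS f g = 0)
    {U : Submodule F V} (hU : TotallySingular Q U) (hk : finrank F U = k) :
    XX Q f U = - (Fintype.card F : ℝ) ^ 2 * SS f U := by
  have hC := count_sing hV h hQw hU hk
  set q : ℝ := ((Fintype.card F : ℕ) : ℝ) with hq
  have hq1 : 1 < q := by rw [hq]; exact_mod_cast Fintype.one_lt_card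
  have hcU := sum_ind_mem U
  rw [hk, ← hq] at hcU
  set Y : V → Prop := fun y => (y ∈ perp Q U ∧ Q y = 0) ∧ y ∉ U with hY
  have z : ∑ y, ind (Y y) * SS f (U ⊔ Submodule.span F {y}) = 0 := by
    refine Finset.sum_eq_zero fun y _ => ?_
    by_cases hy : Y y
    · rw [hg, mul_zero]
      refine ⟨ts_sup hU hy.1.2 hy.1.1, ?_⟩
      rw [Submodule.finrank_sup_span_singleton hy.2, hk]
    · rw [ind_neg hy, zero_mul]
  have hsub : ∀ y, ind (Y y) = ind (y ∈ perp Q U ∧ Q y = 0) - ind (y ∈ U) := by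
    intro y
    by_cases hy : y ∈ U
    · rw [ind_pos hy, ind_neg (fun h => h.2 hy), ind_pos ⟨ts_le_perp hU hy, hU y hy⟩]; ring
    · rw [ind_neg hy, sub_zero]
      exact ind_congr ⟨fun h => h.1, fun h => ⟨h, hy⟩⟩
  have key : ∀ u, f u ≠ 0 → ∑ y, ind (Y y) * ind (u ∈ U ⊔ Submodule.span F {y}) =
      ind (u ∈ U) * (q ^ (k + 3) - q ^ (k + 2)) + ind (u ∈ perp Q U) * (q ^ (k + 1) - q ^ k) := by
    intro u hu
    have hQu := hf u hu
    by_cases h1 : u ∈ U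
    · rw [ind_pos h1, ind_pos (ts_le_perp hU h1)]
      have : ∀ y, ind (u ∈ U ⊔ Submodule.span F {y}) = 1 := fun y =>
        ind_pos (Submodule.mem_sup_left h1)
      simp only [this, mul_one, hsub, Finset.sum_sub_distrib, hC, hcU]
      ring
    · rw [ind_neg h1]
      by_cases h2 : u ∈ perp Q U
      · rw [ind_pos h2]
        have h3 := sum_ind_mem (U ⊔ Submodule.span F {u})
        rw [Submodule.finrank_sup_span_singleton h1, hk, ← hq] at h3
        rw [zero_mul, zero_add, one_mul, ← h3, ← hcU, ← Finset.sum_sub_distrib]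
        refine Finset.sum_congr rfl fun y _ => ?_
        by_cases hy : y ∈ U
        · rw [ind_neg (fun h => h.2 hy), ind_pos hy, ind_pos (Submodule.mem_sup_left hy)]; ring
        · rw [ind_neg hy, sub_zero, ← ind_and]
          apply ind_congr
          have exch : ∀ a b : V, a ∉ U → a ∈ U ⊔ Submodule.span F {b} →
              b ∈ U ⊔ Submodule.span F {a} := by
            intro a b ha hab
            obtain ⟨w, hw, x, hx, rfl⟩ := Submodule.mem_sup.1 hab
            obtain ⟨c, rfl⟩ := Submodule.mem_span_singleton.1 hx
            have hc : c ≠ 0 := by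
              rintro rfl
              apply ha; simpa using hw
            have : b = (-c⁻¹) • w + c⁻¹ • (w + c • b) := by
              rw [smul_add, smul_smul, inv_mul_cancel₀ hc]; module
            rw [this]
            exact Submodule.add_mem_sup (U.smul_mem _ hw)
              (Submodule.smul_mem _ _ (by rw [← this]; exact Submodule.mem_span_singleton_self _))
          constructor
          · rintro ⟨_, hh⟩
            exact exch _ _ h1 hh
          · intro hh
            refine ⟨⟨⟨?_, ?_⟩, hy⟩, exch _ _ hy hh⟩
            · exact (sup_le (ts_le_perp hU) (by rwa [Submodule.span_singleton_le_iff_mem]) :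
                U ⊔ Submodule.span F {u} ≤ _) hh
            · exact ts_sup hU hQu h2 y hh
      · rw [ind_neg h2]
        simp only [zero_mul, add_zero]
        refine Finset.sum_eq_zero fun y _ => ?_
        by_cases hy : Y y
        · rw [ind_neg (p := u ∈ _), mul_zero]
          intro hh
          exact h2 ((sup_le (ts_le_perp hU) (by
            rw [Submodule.span_singleton_le_iff_mem]; exact hy.1.1) :
                U ⊔ Submodule.span F {y} ≤ _) hh)
        · rw [ind_neg hy, zero_mul]
  have fin : SS f U * (q ^ (k + 3) - q ^ (k + 2)) + XX Q f U * (q ^ (k + 1) - q ^ k) = 0 := by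
    rw [← z]
    unfold SS XX
    simp only [Finset.mul_sum, Finset.sum_mul]
    rw [Finset.sum_comm, ← Finset.sum_add_distrib]
    refine Finset.sum_congr rfl fun u _ => ?_
    by_cases hu : f u = 0
    · simp [hu]
    · simp only [← mul_assoc]
      rw [← Finset.sum_mul, key u hu]; ring
  have hne : q ^ (k + 1) - q ^ k ≠ 0 := by
    have : q ^ (k + 1) - q ^ k = q ^ k * (q - 1) := by ring
    rw [this]
    have := pow_pos (zero_lt_one.trans hq1) k
    have : 0 < q - 1 := by linarith
    positivity
  apply mul_right_cancel₀ hne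
  linear_combination fin

theorem main_sum [Fintype F] [Fintype V] {Q : QuadraticForm F V} {n : ℕ}
    (hV : finrank F V = 2 * n + 2) (h : PND Q) (hQw : HasWittIndex Q n)
    (f : V → ℝ) (hf : ∀ x, f x ≠ 0 → Q x = 0)
    (hg : ∀ g, IsGenerator Q n g → SS f g = 0) (d : ℕ) :
    ∀ U : Submodule F V, TotallySingular Q U → finrank F U + d = n →
    XX Q f U = - (Fintype.card F : ℝ) ^ (d + 1) * SS f U := by
  induction d using Nat.strong_induction_on with
  | _ d ih =>
    intro U hU hd
    match d, ih, hd with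
    | 0, ih, hd =>
      have hgU : IsGenerator Q n U := ⟨hU, by omega⟩
      rw [hg U hgU, mul_zero, ← hg U hgU]
      unfold XX SS
      refine Finset.sum_congr rfl fun u _ => ?_
      by_cases hu : f u = 0
      · simp [hu]
      · congr 1
        exact ind_congr ⟨fun hh => gen_perp hQw hgU (hf u hu) hh, fun hh => ts_le_perp hU hh⟩
    | 1, ih, hd =>
      obtain rfl : n = finrank F U + 1 := by omega
      exact base hV h hQw f hf hg hU rfl
    | d + 2, ih, hd =>
      obtain ⟨g, hgg, hUg⟩ := extend_gen hV h hQw hU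
      have : ¬ g ≤ U := fun hle => by
        have := Submodule.finrank_mono hle
        have := hgg.2
        omega
      obtain ⟨e1, h1g, h1U⟩ := SetLike.not_le_iff_exists.1 this
      have r1 := Submodule.finrank_sup_span_singleton h1U
      have : ¬ g ≤ U ⊔ Submodule.span F {e1} := fun hle => by
        have := Submodule.finrank_mono hle
        have := hgg.2
        omega
      obtain ⟨e2, h2g, h2U⟩ := SetLike.not_le_iff_exists.1 this
      have r2 := Submodule.finrank_sup_span_singleton h2U
      have hi : ∀ α β : F, α • e1 + β • e2 ∈ U → α = 0 ∧ β = 0 := by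
        intro α β hab
        have hb : β = 0 := by
          by_contra hb
          apply h2U
          have : e2 = β⁻¹ • (α • e1 + β • e2) + (-(β⁻¹ * α)) • e1 := by
            rw [smul_add, smul_smul, smul_smul, inv_mul_cancel₀ hb]; module
          rw [this]
          exact Submodule.add_mem_sup (U.smul_mem _ hab)
            (Submodule.smul_mem _ _ (Submodule.mem_span_singleton_self _))
        refine ⟨?_, hb⟩
        by_contra ha
        apply h1U
        rw [hb, zero_smul, add_zero] at hab
        exact (U.smul_mem_iff ha).1 hab
      have one : ∀ e ∈ g, e ∉ U → XX Q f (U ⊔ Submodule.span F {e}) =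
          - (Fintype.card F * (Fintype.card F : ℝ) ^ (d + 1)) * SS f (U ⊔ Submodule.span F {e}) := by
        intro e heg heU
        rw [ih (d + 1) (by omega)]
        · ring
        · intro v hv
          exact hgg.1 v ((sup_le hUg (by rwa [Submodule.span_singleton_le_iff_mem]) :
            U ⊔ Submodule.span F {e} ≤ g) hv)
        · rw [Submodule.finrank_sup_span_singleton heU]; omega
      rw [step Q f U e1 e2 hi ((Fintype.card F : ℝ) ^ (d + 1))]
      · ring
      · intro b
        apply one _ (g.add_mem h1g (g.smul_mem _ h2g))
        intro hb
        have := hi 1 b (by simpa using hb)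
        exact one_ne_zero this.1
      · apply one _ h2g
        intro hb
        have := hi 0 1 (by simpa using hb)
        exact one_ne_zero this.2
      · apply ih d (by omega)
        · intro v hv
          exact hgg.1 v ((sup_le (sup_le hUg (by rwa [Submodule.span_singleton_le_iff_mem]))
            (by rwa [Submodule.span_singleton_le_iff_mem]) :
            U ⊔ Submodule.span F {e1} ⊔ Submodule.span F {e2} ≤ g) hv)
        · omega

theorem SS_span [Fintype F] [Fintype V] (f : V → ℝ) (h0 : f 0 = 0)
    (hh : ∀ (c : F) x, c ≠ 0 → f (c • x) = f x) (x : V) :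
    SS f (Submodule.span F {x}) = (Fintype.card F - 1) * f x := by
  classical
  by_cases hx : x = 0
  · subst hx
    unfold SS
    rw [h0, mul_zero]
    refine Finset.sum_eq_zero fun u _ => ?_
    by_cases hu : u = 0
    · simp [hu, h0]
    · rw [ind_neg (by simpa using hu), zero_mul]
  have e1 : ∀ u, ind (u ∈ Submodule.span F {x}) = ∑ c : F, ind (u = c • x) := by
    intro u
    by_cases hu : u ∈ Submodule.span F {x}
    · rw [ind_pos hu]
      obtain ⟨c, rfl⟩ := Submodule.mem_span_singleton.1 hu
      rw [sum_ind_unique c]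
      intro i
      rw [eq_comm]
      exact (smul_left_injective F hx).eq_iff
    · rw [ind_neg hu, Finset.sum_eq_zero]
      intro c _
      apply ind_neg
      rintro rfl
      exact hu (Submodule.smul_mem _ _ (Submodule.mem_span_singleton_self x))
  unfold SS
  simp only [e1, Finset.sum_mul]
  rw [Finset.sum_comm]
  have e2 : ∀ c : F, ∑ u, ind (u = c • x) * f u = f x - if c = 0 then f x else 0 := by
    intro c
    rw [Finset.sum_eq_single (c • x)]
    · rw [ind_pos rfl]
      by_cases hc : c = 0
      · simp [hc, h0]
      · simp [hc, hh c x hc]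
    · intro b _ hb; rw [ind_neg hb, zero_mul]
    · simp
  rw [Finset.sum_congr rfl fun c _ => e2 c, Finset.sum_sub_distrib]
  simp; ring

theorem pair_count [Fintype F] [Fintype V] {Q : QuadraticForm F V} {n : ℕ}
    (hV : finrank F V = 2 * n + 2) (h : PND Q) (u w : V) (hu : u ≠ 0) :
    ∑ x, ind (u ∈ perp Q (Submodule.span F {x})) * ind (w ∈ perp Q (Submodule.span F {x})) =
    (Fintype.card F : ℝ) ^ (2 * n) + ind (w ∈ Submodule.span F {u}) *
      ((Fintype.card F : ℝ) ^ (2 * n + 1) - (Fintype.card F : ℝ) ^ (2 * n)) := by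
  have e : ∀ x, ind (u ∈ perp Q (Submodule.span F {x})) * ind (w ∈ perp Q (Submodule.span F {x}))
      = ind (x ∈ perp Q (Submodule.span F {u} ⊔ Submodule.span F {w})) := by
    intro x
    rw [← ind_and]
    apply ind_congr
    rw [mem_perp_sup_span, mem_perp_span, mem_perp_span, mem_perp_span, QuadraticMap.polar_comm,
      QuadraticMap.polar_comm Q x w]
  simp only [e]
  rw [sum_ind_mem]
  have d := finrank_perp h (Submodule.span F {u} ⊔ Submodule.span F {w})
  have d1 := finrank_span_singleton (K := F) hu
  by_cases hwu : w ∈ Submodule.span F {u}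
  · rw [ind_pos hwu]
    rw [sup_eq_left.2 (by rwa [Submodule.span_singleton_le_iff_mem])] at d ⊢
    rw [show finrank F (perp Q (Submodule.span F {u})) = 2 * n + 1 by omega]
    ring
  · rw [ind_neg hwu]
    rw [Submodule.finrank_sup_span_singleton hwu] at d
    rw [show finrank F (perp Q (Submodule.span F {u} ⊔ Submodule.span F {w})) = 2 * n by omega]
    ring

theorem fourier_eig [Fintype F] [Fintype V] {Q : QuadraticForm F V} {n : ℕ} (hn : 1 ≤ n)
    (hV : finrank F V = 2 * n + 2) (h : PND Q) (hQw : HasWittIndex Q n)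
    (f : V → ℝ) (hf : ∀ x, f x ≠ 0 → Q x = 0) (h0 : f 0 = 0)
    (hh : ∀ (c : F) x, c ≠ 0 → f (c • x) = f x)
    (hg : ∀ g, IsGenerator Q n g → SS f g = 0) :
    ∑ x, f x = 0 ∧ ∀ x, XX Q f (Submodule.span F {x}) =
      - ((Fintype.card F : ℝ) ^ n * (Fintype.card F - 1)) * f x := by
  have hsum : ∑ x, f x = 0 := by
    have h1 := main_sum hV h hQw f hf hg n ⊥ (by intro v hv; simp at hv; simp [hv]) (by simp)
    have h2 := SS_span f h0 hh (0 : V)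
    rw [Submodule.span_zero_singleton, h0, mul_zero] at h2
    rw [h2, mul_zero] at h1
    rw [← h1]
    unfold XX
    refine Finset.sum_congr rfl fun x _ => ?_
    rw [ind_pos (by simp [perp]), one_mul]
  refine ⟨hsum, ?_⟩
  set q : ℝ := ((Fintype.card F : ℕ) : ℝ) with hq
  set G : V → ℝ := fun x => XX Q f (Submodule.span F {x}) with hG
  have hGf : ∀ x, G x * f x = - (q ^ n * (q - 1)) * (f x * f x) := by
    intro x
    by_cases hx : f x = 0
    · simp [hx]
    · have hx0 : x ≠ 0 := fun hc => hx (hc ▸ h0)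
      have := main_sum hV h hQw f hf hg (n - 1) _ (ts_span (hf x hx))
        (by rw [finrank_span_singleton hx0]; omega)
      rw [SS_span f h0 hh, Nat.sub_add_cancel hn] at this
      simp only [hG, this]
      ring
  have hGG : ∑ x, G x * G x = q ^ (2 * n) * (q - 1) ^ 2 * ∑ x, f x * f x := by
    have e1 : ∑ x, G x * G x = ∑ u, ∑ w, f u * f w *
        ∑ x, ind (u ∈ perp Q (Submodule.span F {x})) * ind (w ∈ perp Q (Submodule.span F {x})) := by
      simp only [hG, XX, Finset.sum_mul_sum]
      simp only [Finset.mul_sum]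
      rw [Finset.sum_comm]
      refine Finset.sum_congr rfl fun u _ => ?_
      rw [Finset.sum_comm]
      refine Finset.sum_congr rfl fun w _ => ?_
      refine Finset.sum_congr rfl fun x _ => ?_
      ring
    have e2 : ∀ u w, f u * f w *
        ∑ x, ind (u ∈ perp Q (Submodule.span F {x})) * ind (w ∈ perp Q (Submodule.span F {x})) =
        q ^ (2 * n) * (f u * f w) +
          (q ^ (2 * n + 1) - q ^ (2 * n)) * f u * (ind (w ∈ Submodule.span F {u}) * f w) := by
      intro u w
      by_cases hu : f u = 0
      · simp [hu]
      by_cases hw : f w = 0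
      · simp [hw]
      rw [pair_count hV h u w (fun hc => hu (hc ▸ h0))]
      ring
    have e3 : ∀ u, ∑ w, ind (w ∈ Submodule.span F {u}) * f w = (q - 1) * f u :=
      fun u => SS_span f h0 hh u
    rw [e1]
    simp only [e2, Finset.sum_add_distrib, ← Finset.mul_sum, e3, hsum]
    simp only [mul_zero, Finset.sum_const_zero, zero_add]
    rw [Finset.mul_sum]
    refine Finset.sum_congr rfl fun u _ => ?_
    ring
  have hz : ∑ x, (G x + q ^ n * (q - 1) * f x) ^ 2 = 0 := by
    have : ∀ x, (G x + q ^ n * (q - 1) * f x) ^ 2 =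
        G x * G x - q ^ (2 * n) * (q - 1) ^ 2 * (f x * f x) := by
      intro x
      linear_combination (2 * q ^ n * (q - 1)) * hGf x
    simp only [this, Finset.sum_sub_distrib, hGG, ← Finset.mul_sum, sub_self]
  rw [Finset.sum_eq_zero_iff_of_nonneg (fun x _ => sq_nonneg _)] at hz
  intro x
  have := pow_eq_zero_iff (two_ne_zero) |>.1 (hz x (Finset.mem_univ x))
  linear_combination this

theorem antisym [Fintype F] [Fintype V] {Q : QuadraticForm F V} {n : ℕ} (hn : 1 ≤ n)
    (hV : finrank F V = 2 * n + 2) (h : PND Q) (hQw : HasWittIndex Q n)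
    (f : V → ℝ) (hf : ∀ x, f x ≠ 0 → Q x = 0) (h0 : f 0 = 0)
    (hh : ∀ (c : F) x, c ≠ 0 → f (c • x) = f x)
    (hg : ∀ g, IsGenerator Q n g → SS f g = 0)
    (N : V) (hN : Q N ≠ 0) (hfN : ∀ x, f x ≠ 0 → QuadraticMap.polar Q x N ≠ 0)
    (v : V) (hv : Q v = 0) (hvN : QuadraticMap.polar Q v N ≠ 0) :
    ∃ t : F, Q (v + t • N) = 0 ∧ QuadraticMap.polar Q (v + t • N) N ≠ 0 ∧
      f v + f (v + t • N) = 0 := by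
  obtain ⟨hsum, hX⟩ := fourier_eig hn hV h hQw f hf h0 hh hg
  have hQt : ∀ t : F, Q (v + t • N) = t * (t * Q N + QuadraticMap.polar Q v N) := by
    intro t
    rw [Q_add, hv, QuadraticMap.map_smul, QuadraticMap.polar_smul_right, smul_eq_mul, smul_eq_mul]
    ring
  have hs : ∑ t : F, XX Q f (Submodule.span F {v + t • N}) = 0 := by
    rw [← hsum]
    unfold XX
    rw [Finset.sum_comm]
    refine Finset.sum_congr rfl fun u _ => ?_
    rw [← Finset.sum_mul]
    by_cases hu : f u = 0
    · simp [hu]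
    have := hfN u hu
    rw [QuadraticMap.polar_comm] at this
    rw [sum_ind_unique (- QuadraticMap.polar Q v u / QuadraticMap.polar Q N u), one_mul]
    intro t
    rw [mem_perp_span, QuadraticMap.polar_add_left, QuadraticMap.polar_smul_left, eq_div_iff this,
      smul_eq_mul]
    constructor
    · intro h; linear_combination h
    · intro h; linear_combination h
  simp only [hX, ← Finset.mul_sum] at hs
  have hq1 : (1 : ℝ) < Fintype.card F := by exact_mod_cast Fintype.one_lt_card
  have hne : - ((Fintype.card F : ℝ) ^ n * (Fintype.card F - 1)) ≠ 0 := by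
    have := pow_pos (zero_lt_one.trans hq1) n
    have : (0 : ℝ) < Fintype.card F - 1 := by linarith
    rw [neg_ne_zero]
    positivity
  have hs' := (mul_eq_zero.1 hs).resolve_left hne
  set t0 : F := - QuadraticMap.polar Q v N / Q N with ht0
  have ht0N : t0 * Q N = - QuadraticMap.polar Q v N := by rw [ht0]; field_simp
  have ht00 : t0 ≠ 0 := by
    intro hc
    rw [hc, zero_mul] at ht0N
    exact hvN (by linear_combination ht0N)
  refine ⟨t0, ?_, ?_, ?_⟩
  · rw [hQt, ht0N]; ring
  · rw [QuadraticMap.polar_add_left, QuadraticMap.polar_smul_left, QuadraticMap.polar_self,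
      smul_eq_mul, two_nsmul]
    intro hc
    apply hvN
    linear_combination 2 * ht0N - hc
  · classical
    rw [Finset.sum_eq_add_of_mem (0 : F) t0 (Finset.mem_univ _) (Finset.mem_univ _) ht00.symm] at hs'
    · simpa using hs'
    · rintro t - ⟨ht, ht'⟩
      by_contra hc
      have := hf _ hc
      rw [hQt] at this
      have h3 := (mul_eq_zero.1 this).resolve_left ht
      apply ht'
      apply mul_right_cancel₀ hN
      linear_combination h3 - ht0N

theorem point_count [Fintype F] [Fintype V] (T : Set (Submodule F V))
    (hT : ∀ P ∈ T, ∃ v : V, v ≠ 0 ∧ P = Submodule.span F {v}) :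
    ∑ x : V, ind (x ≠ 0 ∧ Submodule.span F {x} ∈ T) = (Fintype.card F - 1) * (T.ncard : ℝ) := by
  classical
  have : Fintype (Submodule F V) := Fintype.ofFinite _
  have e1 : ∀ x : V, ind (x ≠ 0 ∧ Submodule.span F {x} ∈ T) =
      ∑ P : Submodule F V, ind (P ∈ T) * (ind (x ∈ P) * ind (x ≠ 0)) := by
    intro x
    by_cases hx : x = 0
    · simp [hx, ind]
    rw [Finset.sum_eq_single (Submodule.span F {x})]
    · rw [ind_pos (Submodule.mem_span_singleton_self x), ind_and]; ring
    · intro P _ hP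
      by_cases hPT : P ∈ T
      · rw [ind_neg (p := x ∈ P), zero_mul, mul_zero]
        intro hxP
        obtain ⟨v, hv, rfl⟩ := hT P hPT
        apply hP
        symm
        apply Submodule.eq_of_le_of_finrank_eq
        · rwa [Submodule.span_singleton_le_iff_mem]
        · rw [finrank_span_singleton hx, finrank_span_singleton hv]
      · rw [ind_neg hPT, zero_mul]
    · simp
  simp only [e1]
  rw [Finset.sum_comm]
  have e2 : ∀ P : Submodule F V, ∑ x : V, ind (P ∈ T) * (ind (x ∈ P) * ind (x ≠ 0)) =
      (Fintype.card F - 1) * ind (P ∈ T) := by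
    intro P
    rw [← Finset.mul_sum]
    by_cases hPT : P ∈ T
    · obtain ⟨v, hv, rfl⟩ := hT P hPT
      have := SS_span (F := F) (fun x : V => ind (x ≠ 0)) (ind_neg (by simp))
        (fun c x hc => ind_congr (by simp [hc])) v
      unfold SS at this
      rw [this, ind_pos hv]; ring
    · rw [ind_neg hPT]; simp
  simp only [e2, ← Finset.mul_sum]
  congr 1
  unfold ind
  rw [Finset.sum_boole, Set.ncard_eq_toFinset_card']
  congr 2
  ext; simp

/-- A proper relative `m`-ovoid (with `0 < m < q^{n−1}`) forces `q` even and
`2m = q^{n−1}`; in particular it is a relative hemisystem. -/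
theorem statement_8
    (q n : ℕ) [Fintype F] (hq : Fintype.card F = q) (hn : 2 ≤ n)
    (hV : finrank F V = 2 * n + 2)
    (Q : QuadraticForm F V) (hQnd : Nondeg Q) (hQw : HasWittIndex Q n)
    (H : Submodule F V) (hH : finrank F H = 2 * n + 1) (hHnd : NondegOn Q H)
    (m : ℕ) (R : Set (Submodule F V)) (hR : IsRelativeMOvoid Q n H m R)
    (hm0 : 0 < m) (hm1 : m < q ^ (n - 1)) :
    Even q ∧ 2 * m = q ^ (n - 1) ∧
      R.ncard = {P : Submodule F V | IsSingularPoint Q P ∧ ¬ P ≤ H ∧ P ∉ R}.ncard := by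

  have hfd : FiniteDimensional F V := FiniteDimensional.of_finrank_pos (by omega)
  have : Finite V := Module.finite_of_finite F
  have : Fintype V := Fintype.ofFinite V
  have h : PND Q := fun r hr => polar_nondeg hV hQnd hQw r hr
  obtain ⟨N, hN, hHN⟩ := exists_N h (by omega) hHnd
  have hq1 : (1 : ℝ) < Fintype.card F := by exact_mod_cast Fintype.one_lt_card
  have hqpos : (0 : ℝ) < (Fintype.card F : ℝ) ^ (n - 1) := pow_pos (zero_lt_one.trans hq1) _
  set c : ℝ := m / (Fintype.card F : ℝ) ^ (n - 1) with hc
  have hc0 : 0 < c := div_pos (by exact_mod_cast hm0) hqpos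
  have hc1 : c < 1 := by
    rw [hc, div_lt_one hqpos]
    subst hq
    exact_mod_cast hm1
  set f : V → ℝ := fun x => ind (Q x = 0 ∧ x ∉ H) * (ind (Submodule.span F {x} ∈ R) - c) with hfdef
  have hfne : ∀ x, f x ≠ 0 → Q x = 0 ∧ x ∉ H := by
    intro x hx
    by_contra hcon
    apply hx
    simp only [hfdef]
    rw [ind_neg hcon, zero_mul]
  have hf : ∀ x, f x ≠ 0 → Q x = 0 := fun x hx => (hfne x hx).1
  have h0 : f 0 = 0 := by
    by_contra hcon
    exact (hfne 0 hcon).2 H.zero_mem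
  have hh : ∀ (a : F) x, a ≠ 0 → f (a • x) = f x := by
    intro a x ha
    simp only [hfdef]
    have e1 : Submodule.span F {a • x} = Submodule.span F {x} :=
      Submodule.span_singleton_smul_eq (IsUnit.mk0 a ha) x
    rw [e1]
    congr 1
    apply ind_congr
    rw [QuadraticMap.map_smul, H.smul_mem_iff ha]
    simp [ha]
  have hRpt : ∀ x : V, x ≠ 0 → Submodule.span F {x} ∈ R → Q x = 0 ∧ x ∉ H := by
    intro x hx hxR
    obtain ⟨⟨v, hv, hQv, hs⟩, hnH⟩ := hR.1 _ hxR
    refine ⟨?_, fun hxH => hnH (by rwa [Submodule.span_singleton_le_iff_mem])⟩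
    exact ts_span hQv x (hs ▸ Submodule.mem_span_singleton_self x)
  have hg : ∀ g, IsGenerator Q n g → SS f g = 0 := by
    intro g hgg
    by_cases hgH : g ≤ H
    · unfold SS
      refine Finset.sum_eq_zero fun x _ => ?_
      by_cases hx : x ∈ g
      · simp only [hfdef]
        rw [ind_neg (p := Q x = 0 ∧ x ∉ H) (fun hcon => hcon.2 (hgH hx))]; simp
      · rw [ind_neg hx, zero_mul]
    have hm := hR.2 g hgg hgH
    have p1 := point_count {P ∈ R | P ≤ g} (by
      rintro P ⟨hP, -⟩
      obtain ⟨⟨v, hv, -, hs⟩, -⟩ := hR.1 P hP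
      exact ⟨v, hv, hs⟩)
    rw [hm] at p1
    have p2 := sum_ind_mem g
    have p3 := sum_ind_mem (g ⊓ H)
    have d1 := Submodule.finrank_sup_add_finrank_inf_eq g H
    have d2 : finrank F H < finrank F (g ⊔ H : Submodule F V) := by
      apply Submodule.finrank_lt_finrank_of_lt
      exact lt_of_le_of_ne le_sup_right (fun hcon => hgH (hcon ▸ le_sup_left))
    have d3 := Submodule.finrank_le (g ⊔ H)
    have d4 := hgg.2
    rw [d4] at p2
    rw [show finrank F (g ⊓ H : Submodule F V) = n - 1 by omega] at p3
    have e : SS f g = ∑ x : V, ind (x ≠ 0 ∧ Submodule.span F {x} ∈ {P ∈ R | P ≤ g}) -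
        c * (∑ x, ind (x ∈ g) - ∑ x, ind (x ∈ g ⊓ H)) := by
      unfold SS
      rw [← Finset.sum_sub_distrib, Finset.mul_sum, ← Finset.sum_sub_distrib]
      refine Finset.sum_congr rfl fun x _ => ?_
      by_cases hx : x ∈ g
      · have e1 : ind (x ≠ 0 ∧ Submodule.span F {x} ∈ {P ∈ R | P ≤ g}) =
            ind (Q x = 0 ∧ x ∉ H) * ind (Submodule.span F {x} ∈ R) := by
          rw [← ind_and]
          apply ind_congr
          constructor
          · rintro ⟨a, b, -⟩
            exact ⟨hRpt x a b, b⟩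
          · rintro ⟨⟨-, a⟩, b⟩
            refine ⟨fun hcon => a (hcon ▸ H.zero_mem), b, ?_⟩
            rwa [Submodule.span_singleton_le_iff_mem]
        rw [e1, ind_pos hx]
        simp only [hfdef]
        by_cases hxH : x ∈ H
        · rw [ind_pos (p := x ∈ g ⊓ H) ⟨hx, hxH⟩, ind_neg (fun hcon => hcon.2 hxH)]; ring
        · rw [ind_neg (p := x ∈ g ⊓ H) (fun hcon => hxH hcon.2), ind_pos ⟨hgg.1 x hx, hxH⟩]; ring
      · rw [ind_neg hx, ind_neg (p := x ∈ g ⊓ H) (fun hcon => hx hcon.1), ind_neg]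
        · ring
        · rintro ⟨-, -, hcon⟩
          exact hx (by rwa [Submodule.span_singleton_le_iff_mem] at hcon)
    rw [e, p1, p2, p3]
    have : (Fintype.card F : ℝ) ^ n = Fintype.card F * (Fintype.card F : ℝ) ^ (n - 1) := by
      rw [← pow_succ', Nat.sub_add_cancel (by omega)]
    rw [this, hc]
    field_simp
    ring
  have hfN : ∀ x, f x ≠ 0 → QuadraticMap.polar Q x N ≠ 0 :=
    fun x hx hcon => (hfne x hx).2 ((hHN x).2 hcon)
  -- existence of a singular vector outside `H`
  obtain ⟨v, hv, hvH⟩ : ∃ v, Q v = 0 ∧ v ∉ H := by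
    obtain ⟨W, hW, hWn⟩ := hQw.2
    by_cases hWH : W ≤ H
    · have : W ≠ ⊥ := by
        rintro rfl
        rw [finrank_bot] at hWn; omega
      obtain ⟨e, heW, he0⟩ := Submodule.exists_mem_ne_zero_of_ne_bot this
      obtain ⟨z, hz, hzH⟩ : ∃ z, QuadraticMap.polar Q e z ≠ 0 ∧ z ∉ H := by
        obtain ⟨a, ha⟩ : ∃ a, QuadraticMap.polar Q e a ≠ 0 := by
          by_contra hcon
          push Not at hcon
          exact he0 (h e hcon)
        by_cases haH : a ∈ H
        · obtain ⟨b, hb⟩ : ∃ b, b ∉ H := by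
            by_contra hcon
            push Not at hcon
            have : H = ⊤ := by ext x; simp [hcon x]
            rw [this, finrank_top] at hH
            omega
          by_cases hbe : QuadraticMap.polar Q e b = 0
          · refine ⟨a + b, ?_, ?_⟩
            · rwa [QuadraticMap.polar_add_right, hbe, add_zero]
            · rwa [H.add_mem_iff_right haH]
          · exact ⟨b, hbe, hb⟩
        · exact ⟨a, ha, haH⟩
      refine ⟨z + (-Q z / QuadraticMap.polar Q e z) • e, ?_, ?_⟩
      · rw [Q_add, QuadraticMap.map_smul, hW e heW, QuadraticMap.polar_smul_right,
          QuadraticMap.polar_comm Q z e, smul_eq_mul, smul_eq_mul]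
        field_simp
        ring
      · rwa [H.add_mem_iff_left (H.smul_mem _ (hWH heW))]
    · obtain ⟨v, hv, hvH⟩ := SetLike.not_le_iff_exists.1 hWH
      exact ⟨v, hW v hv, hvH⟩
  have hn1 : 1 ≤ n := by omega
  obtain ⟨t, ht1, ht2, ht3⟩ := antisym hn1 hV h hQw f hf h0 hh hg N hN hfN v hv
    (fun hcon => hvH ((hHN v).2 hcon))
  have hc2 : c = 1 / 2 := by
    simp only [hfdef] at ht3
    rw [ind_pos (p := Q v = 0 ∧ v ∉ H) ⟨hv, hvH⟩,
      ind_pos (p := Q (v + t • N) = 0 ∧ v + t • N ∉ H) ⟨ht1, fun hcon => ht2 ((hHN _).1 hcon)⟩] at ht3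
    unfold ind at ht3
    split_ifs at ht3 <;> linarith
  have h2m : 2 * m = q ^ (n - 1) := by
    rw [hc, div_eq_iff hqpos.ne'] at hc2
    subst hq
    have : (2 * m : ℝ) = (Fintype.card F : ℝ) ^ (n - 1) := by linarith
    exact_mod_cast this
  refine ⟨?_, h2m, ?_⟩
  · have : Even (q ^ (n - 1)) := ⟨m, by omega⟩
    exact (Nat.even_pow.1 this).1
  · have hsum := (fourier_eig hn1 hV h hQw f hf h0 hh hg).1
    have p1 := point_count R (by
      intro P hP
      obtain ⟨⟨v, hv, -, hs⟩, -⟩ := hR.1 P hP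
      exact ⟨v, hv, hs⟩)
    have p2 := point_count {P : Submodule F V | IsSingularPoint Q P ∧ ¬ P ≤ H ∧ P ∉ R} (by
      rintro P ⟨⟨v, hv, -, hs⟩, -⟩
      exact ⟨v, hv, hs⟩)
    have e : ∑ x, f x = 1 / 2 * (∑ x : V, ind (x ≠ 0 ∧ Submodule.span F {x} ∈ R) -
        ∑ x : V, ind (x ≠ 0 ∧ Submodule.span F {x} ∈
          {P : Submodule F V | IsSingularPoint Q P ∧ ¬ P ≤ H ∧ P ∉ R})) := by
      rw [← Finset.sum_sub_distrib, Finset.mul_sum]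
      refine Finset.sum_congr rfl fun x _ => ?_
      simp only [hfdef]
      rw [hc2]
      by_cases hx : Q x = 0 ∧ x ∉ H
      · have hx0 : x ≠ 0 := fun hcon => hx.2 (hcon ▸ H.zero_mem)
        rw [ind_pos hx]
        by_cases hxR : Submodule.span F {x} ∈ R
        · rw [ind_pos hxR, ind_pos ⟨hx0, hxR⟩, ind_neg (fun hcon => hcon.2.2.2 hxR)]; ring
        · rw [ind_neg hxR, ind_neg (fun hcon => hxR hcon.2), ind_pos]
          · ring
          · exact ⟨hx0, ⟨x, hx0, hx.1, rfl⟩,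
              by rw [Submodule.span_singleton_le_iff_mem]; exact hx.2, hxR⟩
      · rw [ind_neg hx, ind_neg (p := x ≠ 0 ∧ Submodule.span F {x} ∈ R)
          (fun hcon => hx (hRpt x hcon.1 hcon.2)),
          ind_neg (p := x ≠ 0 ∧ Submodule.span F {x} ∈
            {P : Submodule F V | IsSingularPoint Q P ∧ ¬ P ≤ H ∧ P ∉ R})]
        · ring
        · rintro ⟨-, ⟨w, hw, hQw, hs⟩, hnH, -⟩
          rw [Submodule.span_singleton_le_iff_mem] at hnH
          exact hx ⟨ts_span hQw x (hs ▸ Submodule.mem_span_singleton_self x), hnH⟩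
    rw [hsum, p1, p2] at e
    have hq10 : (Fintype.card F : ℝ) - 1 ≠ 0 := by linarith
    have : (R.ncard : ℝ) =
        ({P : Submodule F V | IsSingularPoint Q P ∧ ¬ P ≤ H ∧ P ∉ R}.ncard : ℝ) := by
      apply mul_left_cancel₀ hq10
      linarith
    exact_mod_cast this
end
end

section
/- Let q be an even prime power and n ≥ 2. Then the set of singular points of Q⁻(4n+1,q) not contained in H can be partitioned into two relative hemisystems with respect to the parabolic section 𝒬 = Q(4n,q); in particular there exists a relative (q^{2n−1}/2)-ovoid of Q⁻(4n+1,q) with respect to 𝒬. -/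
noncomputable section

open Module

variable {F V : Type*} [Field F] [AddCommGroup V] [Module F V]

theorem aux_finrank_inf_ker [FiniteDimensional F V] {M : Type*} [AddCommGroup M] [Module F M]
    [FiniteDimensional F M]
    (U : Submodule F V) (f : V →ₗ[F] M) (hf : ∀ m : M, ∃ u ∈ U, f u = m) :
    finrank F (U ⊓ LinearMap.ker f : Submodule F V) + finrank F M = finrank F U := by
  have h := LinearMap.finrank_range_add_finrank_ker (f.domRestrict U)
  have h1 : LinearMap.range (f.domRestrict U) = ⊤ := by
    rw [LinearMap.range_eq_top]
    intro m
    obtain ⟨u, hu, rfl⟩ := hf m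
    exact ⟨⟨u, hu⟩, rfl⟩
  have h2 : (U ⊓ LinearMap.ker f : Submodule F V)
      = (LinearMap.ker (f.domRestrict U)).map U.subtype := by
    ext x
    simp only [Submodule.mem_inf, LinearMap.mem_ker, Submodule.mem_map]
    constructor
    · rintro ⟨hx, h0⟩
      exact ⟨⟨x, hx⟩, h0, rfl⟩
    · rintro ⟨⟨y, hy⟩, h0, rfl⟩
      exact ⟨hy, h0⟩
  rw [h1, finrank_top] at h
  rw [h2, Submodule.finrank_map_subtype_eq]
  omega

/-- radical of `B` on `U` -/
def radOn (B : V →ₗ[F] V →ₗ[F] F) (U : Submodule F V) : Submodule F V where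
  carrier := {u | u ∈ U ∧ ∀ w ∈ U, B u w = 0}
  add_mem' := by
    rintro a b ⟨ha, ha'⟩ ⟨hb, hb'⟩
    exact ⟨U.add_mem ha hb, fun w hw => by simp [ha' w hw, hb' w hw]⟩
  zero_mem' := ⟨U.zero_mem, fun w _ => by simp⟩
  smul_mem' := by
    rintro c a ⟨ha, ha'⟩
    exact ⟨U.smul_mem c ha, fun w hw => by simp [ha' w hw]⟩

theorem mem_radOn {B : V →ₗ[F] V →ₗ[F] F} {U : Submodule F V} {u : V} :
    u ∈ radOn B U ↔ u ∈ U ∧ ∀ w ∈ U, B u w = 0 := Iff.rfl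

/-- the part of `U` orthogonal to `x, y` -/
def perp2 (B : V →ₗ[F] V →ₗ[F] F) (U : Submodule F V) (x y : V) : Submodule F V :=
  U ⊓ LinearMap.ker ((B x).prod (B y))

theorem mem_perp2 {B : V →ₗ[F] V →ₗ[F] F} {U : Submodule F V} {x y u : V} :
    u ∈ perp2 B U x y ↔ u ∈ U ∧ B x u = 0 ∧ B y u = 0 := by
  simp [perp2]

theorem perp2_finrank [FiniteDimensional F V] (B : V →ₗ[F] V →ₗ[F] F) (hA : ∀ x, B x x = 0)
    (hS : ∀ x y, B x y = B y x) (U : Submodule F V) {x y : V} (hx : x ∈ U) (hy : y ∈ U)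
    (hxy : B x y = 1) : finrank F (perp2 B U x y) + 2 = finrank F U := by
  have := aux_finrank_inf_ker U ((B x).prod (B y)) (by
    rintro ⟨a, b⟩
    refine ⟨a • y + b • x, U.add_mem (U.smul_mem _ hy) (U.smul_mem _ hx), ?_⟩
    simp [hA, hxy, hS y x])
  have h2 : finrank F (F × F) = 2 := by simp
  rw [h2] at this
  exact this

theorem perp2_decomp [CharP F 2] (B : V →ₗ[F] V →ₗ[F] F) (hA : ∀ x, B x x = 0)
    (hS : ∀ x y, B x y = B y x) (U : Submodule F V) {x y : V} (hx : x ∈ U) (hy : y ∈ U)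
    (hxy : B x y = 1) (u : V) (hu : u ∈ U) :
    ∃ w ∈ perp2 B U x y, u = w + (B u y • x + B u x • y) := by
  refine ⟨u - (B u y • x + B u x • y), ?_, by abel⟩
  rw [mem_perp2]
  refine ⟨U.sub_mem hu (U.add_mem (U.smul_mem _ hx) (U.smul_mem _ hy)), ?_, ?_⟩
  · simp [hA, hxy, hS x u]
  · simp [hA, hxy, hS y x, hS y u]

theorem radOn_perp2 [CharP F 2] (B : V →ₗ[F] V →ₗ[F] F) (hA : ∀ x, B x x = 0)
    (hS : ∀ x y, B x y = B y x) (U : Submodule F V) {x y : V} (hx : x ∈ U) (hy : y ∈ U)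
    (hxy : B x y = 1) : radOn B (perp2 B U x y) = radOn B U := by
  ext r
  rw [mem_radOn, mem_radOn, mem_perp2]
  constructor
  · rintro ⟨⟨h1, h2, h3⟩, h4⟩
    refine ⟨h1, fun w hw => ?_⟩
    obtain ⟨w', hw', e⟩ := perp2_decomp B hA hS U hx hy hxy w hw
    rw [e]
    simp [h4 w' hw', hS r x, hS r y, h2, h3]
  · rintro ⟨h1, h2⟩
    refine ⟨⟨h1, by rw [hS, h2 x hx], by rw [hS, h2 y hy]⟩, fun w hw => h2 w (mem_perp2.1 hw).1⟩

theorem exists_pair (B : V →ₗ[F] V →ₗ[F] F) (U : Submodule F V) (h : radOn B U ≠ U) :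
    ∃ x ∈ U, ∃ y ∈ U, B x y = 1 := by
  by_contra hc
  apply h
  ext u
  rw [mem_radOn]
  refine ⟨fun h => h.1, fun hu => ⟨hu, fun w hw => ?_⟩⟩
  by_contra h0
  exact hc ⟨u, hu, (B u w)⁻¹ • w, U.smul_mem _ hw, by simp [h0]⟩

theorem alt_parity [FiniteDimensional F V] [CharP F 2] (B : V →ₗ[F] V →ₗ[F] F)
    (hA : ∀ x, B x x = 0) (hS : ∀ x y, B x y = B y x) : ∀ (d : ℕ) (U : Submodule F V),
    finrank F U = d → ∃ k, finrank F U = finrank F (radOn B U) + 2 * k := by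
  intro d
  induction d using Nat.strong_induction_on with
  | _ d ih =>
    intro U hU
    by_cases h : radOn B U = U
    · exact ⟨0, by rw [h]; simp⟩
    · obtain ⟨x, hx, y, hy, hxy⟩ := exists_pair B U h
      have h1 := perp2_finrank B hA hS U hx hy hxy
      obtain ⟨k, hk⟩ := ih _ (by omega) (perp2 B U x y) rfl
      rw [radOn_perp2 B hA hS U hx hy hxy] at hk
      exact ⟨k + 1, by omega⟩

theorem exists_J [FiniteDimensional F V] [CharP F 2] (B : V →ₗ[F] V →ₗ[F] F)
    (hA : ∀ x, B x x = 0) (hS : ∀ x y, B x y = B y x) (δ : F) : ∀ (k : ℕ) (U : Submodule F V),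
    radOn B U = ⊥ → finrank F U = 4 * k →
    ∃ J : V →ₗ[F] V, (∀ x, J x ∈ U) ∧ (∀ x y, B (J x) y = B x (J y)) ∧
      ∀ x ∈ U, J (J x) = J x + δ • x := by
  intro k
  induction k with
  | zero =>
    intro U _ hU
    have hU : U = ⊥ := by simpa using hU
    subst hU
    refine ⟨0, by simp, by simp, fun x hx => ?_⟩
    simp [(Submodule.mem_bot F).1 hx]
  | succ k ih =>
    intro U hr hU
    obtain ⟨e0, he0, f0, hf0, h00⟩ := exists_pair B U (by
      intro h; rw [h] at hr; subst hr; simp at hU)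
    have d1 := perp2_finrank B hA hS U he0 hf0 h00
    have r1 := radOn_perp2 B hA hS U he0 hf0 h00
    obtain ⟨e1, he1, f1, hf1, h11⟩ := exists_pair B (perp2 B U e0 f0) (by
      intro h; rw [r1, hr] at h; rw [← h] at d1; simp at d1; omega)
    have d2 := perp2_finrank B hA hS _ he1 hf1 h11
    have r2 := radOn_perp2 B hA hS _ he1 hf1 h11
    obtain ⟨J, hJ1, hJ2, hJ3⟩ := ih (perp2 B (perp2 B U e0 f0) e1 f1)
      (by rw [r2, r1, hr]) (by omega)
    have D0 := perp2_decomp B hA hS U he0 hf0 h00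
    have D1 := perp2_decomp B hA hS _ he1 hf1 h11
    obtain ⟨he1U, e01, f01⟩ := mem_perp2.1 he1
    obtain ⟨hf1U, e0f1, f0f1⟩ := mem_perp2.1 hf1
    have hK : ∀ z, (∀ x, B z (J x) = 0) → J z = 0 := by
      intro z hz
      have : J z ∈ radOn B (perp2 B (perp2 B U e0 f0) e1 f1) := by
        rw [mem_radOn]
        refine ⟨hJ1 z, fun w hw => ?_⟩
        rw [hJ2, hz]
      rw [r2, r1, hr] at this
      simpa using this
    have hP : ∀ x, (J x ∈ U) ∧ B e0 (J x) = 0 ∧ B f0 (J x) = 0 ∧ B e1 (J x) = 0 ∧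
        B f1 (J x) = 0 := by
      intro x
      have h := hJ1 x
      rw [mem_perp2, mem_perp2] at h
      exact ⟨h.1.1, h.1.2.1, h.1.2.2, h.2.1, h.2.2⟩
    have k1 := hK e0 (fun x => (hP x).2.1)
    have k2 := hK f0 (fun x => (hP x).2.2.1)
    have k3 := hK e1 (fun x => (hP x).2.2.2.1)
    have k4 := hK f1 (fun x => (hP x).2.2.2.2)
    let J' : V →ₗ[F] V := J + (B f0).smulRight e1 + (B f1).smulRight (e1 + δ • e0)
      + (B e0).smulRight (δ • f1) + (B e1).smulRight (f0 + f1)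
    have hJ' : ∀ z, J' z = J z + B f0 z • e1 + B f1 z • (e1 + δ • e0)
      + B e0 z • (δ • f1) + B e1 z • (f0 + f1) := fun z => rfl
    have h2 : (2 : F) = 0 := CharTwo.two_eq_zero
    refine ⟨J', ?_, ?_, ?_⟩
    · intro x
      rw [hJ']
      have := (hP x).1
      refine U.add_mem (U.add_mem (U.add_mem (U.add_mem this ?_) ?_) ?_) ?_ <;>
      apply_rules [U.smul_mem, U.add_mem]
    · intro x y
      rw [hJ', hJ']
      simp only [map_add, map_smul, LinearMap.add_apply, LinearMap.smul_apply, hJ2, smul_eq_mul,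
        hS x e0, hS x e1, hS x f0, hS x f1]
      ring
    · intro z hz
      obtain ⟨z1, hz1, ez⟩ := D0 z hz
      obtain ⟨w, hw, ez1⟩ := D1 z1 hz1
      have hw3 := hJ3 w hw
      obtain ⟨hwU, q3, q4⟩ := mem_perp2.1 hw
      obtain ⟨hwU, q1, q2⟩ := mem_perp2.1 hwU
      obtain ⟨_, p1, p2, p3, p4⟩ := hP w
      generalize B z f0 = a at *
      generalize B z e0 = b at *
      generalize B z1 f1 = c at *
      generalize B z1 e1 = d at *
      subst ez1
      subst ez
      have s00 : B f0 e0 = 1 := by rw [hS, h00]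
      have s11 : B f1 e1 = 1 := by rw [hS, h11]
      have t1 : B e1 e0 = 0 := by rw [hS, e01]
      have t2 : B e1 f0 = 0 := by rw [hS, f01]
      have t3 : B f1 e0 = 0 := by rw [hS, e0f1]
      have t4 : B f1 f0 = 0 := by rw [hS, f0f1]
      simp only [hJ', map_add, map_smul, smul_eq_mul, k1, k2, k3, k4, hA, h00, h11, s00, s11,
        t1, t2, t3, t4, e01, f01, e0f1, f0f1, q1, q2, q3, q4, p1, p2, p3, p4, hw3, smul_zero,
        add_zero, zero_add, mul_zero, mul_one]
      module

theorem even_finrank_of_T [FiniteDimensional F V] [CharP F 2] (δ : F)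
    (hδ : ∀ a : F, a * a + a ≠ δ) (T : V →ₗ[F] V) (hT : ∀ x, T (T x) = T x + δ • x) :
    Even (finrank F V) := by
  classical
  let p : Polynomial F := Polynomial.X ^ 2 + Polynomial.X + Polynomial.C δ
  have hp : p.natDegree = 2 := by simp only [p]; compute_degree!
  have hp0 : p ≠ 0 := by intro h; rw [h] at hp; simp at hp
  have hirr : Irreducible p := by
    rw [Polynomial.irreducible_iff_roots_eq_zero_of_degree_le_three (by omega) (by omega)]
    rw [Multiset.eq_zero_iff_forall_notMem]
    intro a ha
    rw [Polynomial.mem_roots hp0] at ha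
    simp [p] at ha
    apply hδ a
    linear_combination ha - δ * CharTwo.two_eq_zero (R := F)
  have : Fact (Irreducible p) := ⟨hirr⟩
  have hev : Polynomial.aeval T p = 0 := by
    ext x
    simp [p, pow_two, hT]
    have h2 : (2 : F) = 0 := CharTwo.two_eq_zero
    have : (2 : F) • (T x + δ • x) = 0 := by rw [h2, zero_smul]
    rw [← this]; module
  let φ : AdjoinRoot p →ₐ[F] Module.End F V := Ideal.Quotient.liftₐ _ (Polynomial.aeval T) (by
    intro a ha
    obtain ⟨b, rfl⟩ := Ideal.mem_span_singleton.1 ha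
    simp [hev])
  let _ : Module (AdjoinRoot p) V := Module.compHom V φ.toRingHom
  have : IsScalarTower F (AdjoinRoot p) V := ⟨fun a b v => by
    change φ (a • b) v = a • φ b v
    simp⟩
  have h := Module.finrank_mul_finrank F (AdjoinRoot p) V
  have h3 : finrank F (AdjoinRoot p) = 2 := by
    rw [(AdjoinRoot.powerBasis hp0).finrank]; simpa using hp
  rw [← h, h3]
  exact even_two_mul _

theorem exists_P [Fintype F] [CharP F 2] : ∃ P : AddSubgroup F, (∀ a, a * a + a ∈ P) ∧
    (∀ x y, x ∉ P → y ∉ P → x + y ∈ P) ∧ ∃ δ, δ ∉ P := by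
  classical
  have h2 : (2 : F) = 0 := CharTwo.two_eq_zero
  let f : F →+ F :=
    { toFun := fun a => a * a + a
      map_zero' := by simp
      map_add' := fun a b => by linear_combination a * b * h2 }
  have hf : ∀ a, f a = a * a + a := fun a => rfl
  have hker : Nat.card f.ker = 2 := by
    have : (f.ker : Set F) = {0, 1} := by
      ext a
      simp only [SetLike.mem_coe, AddMonoidHom.mem_ker, hf, Set.mem_insert_iff,
        Set.mem_singleton_iff]
      constructor
      · intro h
        have h' : a * (a - 1) = 0 := by linear_combination h - a * h2
        rcases mul_eq_zero.1 h' with h | h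
        · exact Or.inl h
        · exact Or.inr (sub_eq_zero.1 h)
      · rintro (rfl | rfl)
        · simp
        · linear_combination h2
    have h3 : Nat.card f.ker = Set.ncard (f.ker : Set F) := rfl
    rw [h3, this, Set.ncard_pair zero_ne_one]
  have hidx : f.range.index = 2 := by
    have h1 := AddSubgroup.card_mul_index f.range
    have h3 := AddSubgroup.card_mul_index f.ker
    rw [AddSubgroup.index_ker, hker] at h3
    have h4 : 0 < Nat.card f.range := Nat.card_pos
    apply Nat.eq_of_mul_eq_mul_left h4
    rw [h1, ← h3, mul_comm]
  refine ⟨f.range, fun a => ⟨a, rfl⟩, fun x y hx hy => ?_, ?_⟩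
  · rw [AddSubgroup.add_mem_iff_of_index_two hidx]
    simp [hx, hy]
  · by_contra hc
    push Not at hc
    have : f.range = ⊤ := by ext x; simpa using hc x
    rw [this, AddSubgroup.index_top] at hidx
    omega

theorem exists_sqrt [Fintype F] [CharP F 2] (a : F) : ∃ b, b * b = a := by
  have h := FiniteField.isSquare_of_char_two (F := F) (by
    exact (CharP.eq F (ringChar.charP F) inferInstance)) a
  obtain ⟨b, hb⟩ := h
  exact ⟨b, hb.symm⟩

theorem max_ts (Q : QuadraticForm F V) [FiniteDimensional F V] (B : V →ₗ[F] V →ₗ[F] F)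
    (hQB : ∀ x y, Q (x + y) = Q x + Q y + B x y)
    {m : ℕ} (hW : ∀ W : Submodule F V, TotallySingular Q W → finrank F W ≤ m)
    (g : Submodule F V) (hg : IsGenerator Q m g) (t : V) (ht : Q t = 0)
    (hp : ∀ x ∈ g, B x t = 0) : t ∈ g := by
  have h1 : TotallySingular Q (g ⊔ Submodule.span F {t}) := by
    intro v hv
    obtain ⟨x, hx, y, hy, rfl⟩ := Submodule.mem_sup.1 hv
    obtain ⟨c, rfl⟩ := Submodule.mem_span_singleton.1 hy
    rw [hQB, hg.1 x hx, QuadraticMap.map_smul, ht]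
    simp [hp x hx]
  have h2 := Submodule.eq_of_le_of_finrank_le (le_sup_left : g ≤ g ⊔ Submodule.span F {t})
    (by rw [hg.2]; exact hW _ h1)
  rw [h2]
  exact Submodule.mem_sup_right (Submodule.mem_span_singleton_self t)

theorem core [Fintype F] [CharP F 2] [FiniteDimensional F V] (Q : QuadraticForm F V)
    (B : V →ₗ[F] V →ₗ[F] F)
    (hQB : ∀ x y, Q (x + y) = Q x + Q y + B x y)
    (hA : ∀ x, B x x = 0) (hS : ∀ x y, B x y = B y x)
    (P : AddSubgroup F) (hP : ∀ a, a * a + a ∈ P) (δ : F) (hδ : δ ∉ P)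
    {n : ℕ}
    (hW : ∀ W : Submodule F V, TotallySingular Q W → finrank F W ≤ 2 * n)
    (v0 N : V) (hN : Q N = 1) (J : V →ₗ[F] V)
    (hJN : J N = 0) (hJN' : ∀ x, B (J x) N = 0)
    (hJ2 : ∀ x y, B (J x) y = B x (J y))
    (hJ3 : ∀ x, J (J x) = J x + δ • (x + B x N • v0 + B x v0 • N))
    (g : Submodule F V) (hg : IsGenerator Q (2 * n) g) (v : V) (hv : v ∈ g) (hvN : B v N = 1) :
    ∃ r ∈ g, B r N = 0 ∧ ∀ x ∈ g, B x N = 1 →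
      (Q (J (x + r)) + δ * B (x + r) v0) - (Q (J x) + δ * B x v0) ∉ P := by
  have h2 : (2 : F) = 0 := CharTwo.two_eq_zero
  have hgB : ∀ x ∈ g, ∀ y ∈ g, B x y = 0 := by
    intro x hx y hy
    have := hQB x y
    rw [hg.1 _ (g.add_mem hx hy), hg.1 x hx, hg.1 y hy] at this
    simpa using this.symm
  let g0 : Submodule F V := g ⊓ LinearMap.ker (B N)
  have hg0 : ∀ x, x ∈ g0 ↔ x ∈ g ∧ B x N = 0 := by
    intro x; simp [g0, hS x N]
  have hdim : finrank F g0 + 1 = 2 * n := by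
    have := aux_finrank_inf_ker g (B N) (by
      intro m
      exact ⟨m • v, g.smul_mem _ hv, by simp [hS N v, hvN]⟩)
    rw [hg.2, finrank_self] at this
    exact this
  let B' : V →ₗ[F] V →ₗ[F] F := B ∘ₗ J
  have hB' : ∀ x y, B' x y = B (J x) y := fun x y => rfl
  have hA' : ∀ x, B' x x = 0 := by
    intro x
    have h := hA (J x)
    rw [← hJ2, hJ3] at h
    simp only [map_add, map_smul, LinearMap.add_apply, LinearMap.smul_apply, smul_eq_mul, hA,
      hS v0 x, hS N x] at h
    rw [hB']
    linear_combination h - δ * B x N * B x v0 * h2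
  have hS' : ∀ x y, B' x y = B' y x := by
    intro x y
    rw [hB', hB', hJ2, hS]
  obtain ⟨k, hk⟩ := alt_parity B' hA' hS' _ g0 rfl
  have key : ∃ r ∈ radOn B' g0, Q (J r) + B v (J r) * B v (J r) ≠ 0 := by
    by_contra hc
    push Not at hc
    let T : V →ₗ[F] V := J + ((B v) ∘ₗ J).smulRight N
    have hT : ∀ x, T x = J x + B v (J x) • N := fun x => rfl
    have hTm : ∀ r ∈ radOn B' g0, T r ∈ radOn B' g0 := by
      intro r hr
      have hq := hc r hr
      obtain ⟨hr1, hr2⟩ := mem_radOn.1 hr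
      obtain ⟨hrg, hrN⟩ := (hg0 r).1 hr1
      have hTg : T r ∈ g := by
        apply max_ts Q B hQB hW g hg
        · rw [hT, hQB, QuadraticMap.map_smul, hN]
          simp only [map_smul, hJN', smul_eq_mul]
          linear_combination hq
        · intro x hx
          have hu : x - B x N • v ∈ g0 := by
            rw [hg0]
            refine ⟨g.sub_mem hx (g.smul_mem _ hv), ?_⟩
            simp [hvN]
          have h1 := hr2 _ hu
          rw [hB', hS] at h1
          simp only [map_sub, map_smul, LinearMap.sub_apply, LinearMap.smul_apply,
            smul_eq_mul] at h1
          rw [hT]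
          simp only [map_add, map_smul, smul_eq_mul]
          linear_combination h1 + B x N * B v (J r) * h2
      rw [mem_radOn, hg0]
      refine ⟨⟨hTg, ?_⟩, ?_⟩
      · rw [hT]; simp [hJN', hA]
      · intro u hu
        have h1 := hr2 u hu
        obtain ⟨hug, huN⟩ := (hg0 u).1 hu
        rw [hB'] at h1 ⊢
        rw [hT]
        simp [hJN, hJ3, h1, hgB r hrg u hug, hS N u, huN, hrN]
    have hTT : ∀ r ∈ radOn B' g0, T (T r) = T r + δ • r := by
      intro r hr
      obtain ⟨hr1, hr2⟩ := mem_radOn.1 hr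
      obtain ⟨hrg, hrN⟩ := (hg0 r).1 hr1
      simp only [hT, map_add, map_smul, hJN, hJ3, hrN, hvN, hgB v hv r hrg, smul_zero, add_zero,
        zero_smul, smul_eq_mul, mul_one, zero_add]
      have : (2 : F) • ((δ * B r v0) • N) = 0 := by rw [h2, zero_smul]
      rw [← add_zero (J r + B v (J r) • N + δ • r), ← this]
      module
    have hev := even_finrank_of_T (F := F) δ (fun a ha => hδ (ha ▸ hP a)) (T.restrict hTm) (by
      rintro ⟨r, hr⟩
      exact Subtype.ext (hTT r hr))
    obtain ⟨j, hj⟩ := hev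
    omega
  obtain ⟨r0, hr0, hne⟩ := key
  obtain ⟨a, ha⟩ := exists_sqrt (δ / (Q (J r0) + B v (J r0) * B v (J r0)))
  have hr := (radOn B' g0).smul_mem a hr0
  have hval : Q (J (a • r0)) + B v (J (a • r0)) * B v (J (a • r0)) = δ := by
    simp only [map_smul, QuadraticMap.map_smul, smul_eq_mul]
    rw [eq_div_iff hne] at ha
    linear_combination ha
  generalize a • r0 = r at hr hval
  obtain ⟨hr1, hr2⟩ := mem_radOn.1 hr
  obtain ⟨hrg, hrN⟩ := (hg0 r).1 hr1
  refine ⟨r, hrg, hrN, fun x hx hxN hmem => hδ ?_⟩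
  have hu : x - v ∈ g0 := by
    rw [hg0]
    exact ⟨g.sub_mem hx hv, by simp [hxN, hvN]⟩
  have h1 := hr2 _ hu
  rw [hB', hS] at h1
  simp only [map_sub, LinearMap.sub_apply] at h1
  have h3 : B (J x) (J r) = B v (J r) + δ * B r v0 := by
    rw [hJ2, hJ3]
    simp only [map_add, map_smul, hrN, hxN, hgB x hx r hrg, smul_eq_mul]
    linear_combination h1
  have h4 : (Q (J (x + r)) + δ * B (x + r) v0) - (Q (J x) + δ * B x v0)
      + (B v (J r) * B v (J r) + B v (J r)) = δ := by
    simp only [map_add, hQB, LinearMap.add_apply, h3]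
    linear_combination hval + (B v (J r) + δ * B r v0) * h2
  rw [← h4]
  exact P.add_mem hmem (hP _)

theorem setup [Fintype F] [CharP F 2] [FiniteDimensional F V] {n : ℕ}
    (hV : finrank F V = 4 * n + 2)
    (Q : QuadraticForm F V) (B : V →ₗ[F] V →ₗ[F] F)
    (hQB : ∀ x y, Q (x + y) = Q x + Q y + B x y)
    (hA : ∀ x, B x x = 0) (hS : ∀ x y, B x y = B y x)
    (hQ : ∀ v, Q v = 0 → (∀ w, B v w = 0) → v = 0)
    (H : Submodule F V) (hH : finrank F H = 4 * n + 1)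
    (hHQ : ∀ v ∈ H, Q v = 0 → (∀ w ∈ H, B v w = 0) → v = 0) (δ : F) :
    ∃ (v0 N : V) (J : V →ₗ[F] V), Q N = 1 ∧ B v0 N = 1 ∧ (∀ x, x ∈ H ↔ B x N = 0) ∧
      J N = 0 ∧ (∀ x, B (J x) N = 0) ∧ (∀ x y, B (J x) y = B x (J y)) ∧
      (∀ x, J (J x) = J x + δ • (x + B x N • v0 + B x v0 • N)) := by
  have h2 : (2 : F) = 0 := CharTwo.two_eq_zero
  obtain ⟨k, hk⟩ := alt_parity B hA hS _ H rfl
  have hne : radOn B H ≠ ⊥ := by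
    intro h; rw [h, finrank_bot] at hk; omega
  obtain ⟨N', hN', hN'0⟩ := Submodule.exists_mem_ne_zero_of_ne_bot hne
  obtain ⟨hN'H, hN'r⟩ := mem_radOn.1 hN'
  have hQN' : Q N' ≠ 0 := fun h => hN'0 (hHQ N' hN'H h hN'r)
  obtain ⟨a, ha⟩ := exists_sqrt (Q N')⁻¹
  have hNr := (radOn B H).smul_mem a hN'
  have hQN : Q (a • N') = 1 := by
    rw [QuadraticMap.map_smul, ha, smul_eq_mul, inv_mul_cancel₀ hQN']
  generalize a • N' = N at hNr hQN
  obtain ⟨hNH, hNr⟩ := mem_radOn.1 hNr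
  have hrad : radOn B (⊤ : Submodule F V) = ⊥ := by
    obtain ⟨k', hk'⟩ := alt_parity B hA hS _ (⊤ : Submodule F V) rfl
    rw [finrank_top, hV] at hk'
    by_contra hne
    obtain ⟨x, hx, hx0⟩ := Submodule.exists_mem_ne_zero_of_ne_bot hne
    have hxr := (mem_radOn.1 hx).2
    have hQx : Q x ≠ 0 := fun h => hx0 (hQ x h (fun w => hxr w trivial))
    have hle : finrank F (radOn B (⊤ : Submodule F V)) ≤ 1 := by
      apply finrank_le_one (⟨x, hx⟩ : radOn B (⊤ : Submodule F V))
      rintro ⟨y, hy⟩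
      have hyr := (mem_radOn.1 hy).2
      obtain ⟨b, hb⟩ := exists_sqrt (Q y / Q x)
      rw [eq_div_iff hQx] at hb
      have h0 : y + b • x = 0 := by
        apply hQ
        · rw [hQB, QuadraticMap.map_smul, hyr _ trivial, smul_eq_mul]
          linear_combination hb + Q y * h2
        · intro w
          simp [hyr w trivial, hxr w trivial]
      refine ⟨b, Subtype.ext ?_⟩
      change b • x = y
      have h3 : (2 : F) • (b • x) = 0 := by rw [h2, zero_smul]
      have : b • x - y = (2 : F) • (b • x) - (y + b • x) := by module
      rw [h3, h0, sub_zero] at this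
      exact sub_eq_zero.1 this
    have hpos : finrank F (radOn B (⊤ : Submodule F V)) ≠ 0 := by
      intro h
      exact hne (Submodule.finrank_eq_zero.1 h)
    omega
  have hnd : ∀ x, (∀ y, B x y = 0) → x = 0 := by
    intro x hx
    have : x ∈ radOn B (⊤ : Submodule F V) := mem_radOn.2 ⟨trivial, fun w _ => hx w⟩
    rw [hrad] at this
    simpa using this
  have hN0 : N ≠ 0 := by
    rintro rfl; simp at hQN
  obtain ⟨v0, hv0⟩ : ∃ v0, B N v0 = 1 := by
    by_contra hc
    apply hN0
    apply hnd
    intro y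
    by_contra hy
    exact hc ⟨(B N y)⁻¹ • y, by simp [hy]⟩
  have hHk : H = LinearMap.ker (B N) := by
    apply Submodule.eq_of_le_of_finrank_le
    · intro x hx
      exact hNr x hx
    · have := aux_finrank_inf_ker (⊤ : Submodule F V) (B N) (fun m => ⟨m • v0, trivial, by simp [hv0]⟩)
      rw [finrank_top, hV, finrank_self, top_inf_eq] at this
      omega
  obtain ⟨J, hJ1, hJ2, hJ3⟩ := exists_J B hA hS δ n (perp2 B ⊤ N v0)
    (by rw [radOn_perp2 B hA hS ⊤ trivial trivial hv0, hrad])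
    (by
      have := perp2_finrank B hA hS ⊤ (x := N) (y := v0) trivial trivial hv0
      rw [finrank_top, hV] at this
      omega)
  have hJN : J N = 0 := by
    apply hnd
    intro y
    rw [hJ2]
    exact (mem_perp2.1 (hJ1 y)).2.1
  have hJv : J v0 = 0 := by
    apply hnd
    intro y
    rw [hJ2]
    exact (mem_perp2.1 (hJ1 y)).2.2
  refine ⟨v0, N, J, hQN, by rw [hS, hv0], ?_, hJN, ?_, hJ2, ?_⟩
  · intro x
    rw [hHk, LinearMap.mem_ker, hS]
  · intro x
    rw [hS]; exact (mem_perp2.1 (hJ1 x)).2.1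
  · intro x
    obtain ⟨w, hw, e⟩ := perp2_decomp B hA hS ⊤ (x := N) (y := v0) trivial trivial hv0 x trivial
    have hJx : J x = J w := by rw [e]; simp [hJN, hJv]
    rw [hJx, hJ3 w hw]
    congr 2
    have h3 : (2 : F) • (B x v0 • N + B x N • v0) = 0 := by rw [h2, zero_smul]
    calc w = x - (B x v0 • N + B x N • v0) := eq_sub_of_add_eq e.symm
      _ = x - (B x v0 • N + B x N • v0) + (2 : F) • (B x v0 • N + B x N • v0) := by
        rw [h3, add_zero]
      _ = _ := by module

theorem ncard_swap [CharP F 2] [Finite V] (A₁ A₂ : Set V) (r : V)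
    (h₁ : ∀ x ∈ A₁, x + r ∈ A₂) (h₂ : ∀ x ∈ A₂, x + r ∈ A₁) : A₁.ncard = A₂.ncard := by
  apply le_antisymm
  · exact Set.ncard_le_ncard_of_injOn (· + r) h₁ (fun x _ y _ h => add_right_cancel h)
  · exact Set.ncard_le_ncard_of_injOn (· + r) h₂ (fun x _ y _ h => add_right_cancel h)

/-- For `q` even and `n ≥ 2`, the singular points of `Q⁻(4n+1,q)` outside `H` can be
partitioned into two relative hemisystems, i.e. two relative `(q^{2n−1}/2)`-ovoids of
equal size; in particular a relative `(q^{2n−1}/2)`-ovoid exists. -/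
theorem statement_12
    (q n : ℕ) [Fintype F] (hq : Fintype.card F = q) (hq2 : Even q) (hn : 2 ≤ n)
    (hV : finrank F V = 4 * n + 2)
    (Q : QuadraticForm F V) (hQnd : Nondeg Q) (hQw : HasWittIndex Q (2 * n))
    (H : Submodule F V) (hH : finrank F H = 4 * n + 1) (hHnd : NondegOn Q H) :
    ∃ R₁ R₂ : Set (Submodule F V),
      R₁ ∩ R₂ = ∅ ∧
      R₁ ∪ R₂ = {P : Submodule F V | IsSingularPoint Q P ∧ ¬ P ≤ H} ∧
      IsRelativeMOvoid Q (2 * n) H (q ^ (2 * n - 1) / 2) R₁ ∧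
      IsRelativeMOvoid Q (2 * n) H (q ^ (2 * n - 1) / 2) R₂ ∧
      R₁.ncard = R₂.ncard := by
  classical
  have hchar : CharP F 2 := by
    have h := FiniteField.even_card_iff_char_two.2 (by rw [hq]; exact Nat.even_iff.1 hq2)
    rw [← h]; exact ringChar.charP F
  have hfd : FiniteDimensional F V := FiniteDimensional.of_finrank_pos (by omega)
  have hfin : Finite V := Module.finite_of_finite F
  have h2 : (2 : F) = 0 := CharTwo.two_eq_zero
  let B : V →ₗ[F] V →ₗ[F] F := Q.polarBilin
  have hB : ∀ x y, B x y = QuadraticMap.polar Q x y := fun x y => rfl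
  have hQB : ∀ x y, Q (x + y) = Q x + Q y + B x y := by
    intro x y; rw [hB, QuadraticMap.polar]; ring
  have hS : ∀ x y, B x y = B y x := by
    intro x y; rw [hB, hB, QuadraticMap.polar_comm]
  have hA : ∀ x, B x x = 0 := by
    intro x
    rw [hB, QuadraticMap.polar_self]
    simp [h2]
  obtain ⟨P, hP1, hP2, δ, hδ⟩ := exists_P (F := F)
  obtain ⟨v0, N, J, hN, hv0, hHN, hJN, hJN', hJ2, hJ3⟩ :=
    setup hV Q B hQB hA hS hQnd H hH hHnd δ
  let φ : V → F := fun x => Q (J x) + δ * B x v0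
  let A₁ : Set V := {x | (Q x = 0 ∧ B x N = 1) ∧ φ x ∈ P}
  let A₂ : Set V := {x | (Q x = 0 ∧ B x N = 1) ∧ φ x ∉ P}
  let s : V → Submodule F V := fun x => Submodule.span F {x}
  have hs : ∀ x y, B x N = 1 → B y N = 1 → s x = s y → x = y := by
    intro x y hx hy h
    have h1 : x ∈ s y := by rw [← h]; exact Submodule.mem_span_singleton_self x
    obtain ⟨c, rfl⟩ := Submodule.mem_span_singleton.1 h1
    have : c = 1 := by simpa [hy] using hx
    rw [this, one_smul]
  have hpt : ∀ x, Q x = 0 → B x N = 1 → IsSingularPoint Q (s x) ∧ ¬ s x ≤ H := by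
    intro x hx hxN
    refine ⟨⟨x, ?_, hx, rfl⟩, ?_⟩
    · rintro rfl; simp at hxN
    · intro hle
      have := (hHN x).1 (hle (Submodule.mem_span_singleton_self x))
      rw [hxN] at this
      exact one_ne_zero this
  have hpt' : ∀ p, IsSingularPoint Q p → ¬ p ≤ H → ∃ x, Q x = 0 ∧ B x N = 1 ∧ p = s x := by
    rintro p ⟨v, hv, hQv, rfl⟩ hle
    have hvN : B v N ≠ 0 := by
      intro h
      apply hle
      rw [Submodule.span_singleton_le_iff_mem, hHN, h]
    refine ⟨(B v N)⁻¹ • v, by simp [QuadraticMap.map_smul, hQv], by simp [hvN], ?_⟩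
    exact (Submodule.span_singleton_smul_eq (IsUnit.mk0 _ (inv_ne_zero hvN)) v).symm
  have hi₁ : Set.InjOn s A₁ := fun x hx y hy h => hs x y hx.1.2 hy.1.2 h
  have hi₂ : Set.InjOn s A₂ := fun x hx y hy h => hs x y hx.1.2 hy.1.2 h
  have hcount : ∀ g : Submodule F V, IsGenerator Q (2 * n) g → ¬ g ≤ H →
      (A₁ ∩ g).ncard = q ^ (2 * n - 1) / 2 ∧ (A₂ ∩ g).ncard = q ^ (2 * n - 1) / 2 := by
    intro g hg hgH
    obtain ⟨v', hv'g, hv'⟩ := Set.not_subset.1 hgH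
    have hv'N : B v' N ≠ 0 := fun h => hv' ((hHN v').2 h)
    obtain ⟨v, hv, hvN⟩ : ∃ v ∈ g, B v N = 1 :=
      ⟨(B v' N)⁻¹ • v', g.smul_mem _ hv'g, by simp [hv'N]⟩
    obtain ⟨r, hr, hrN, hrx⟩ := core Q B hQB hA hS P hP1 δ hδ hQw.1 v0 N hN J hJN hJN' hJ2 hJ3
      g hg v hv hvN
    have heq : (A₁ ∩ g).ncard = (A₂ ∩ g).ncard := by
      apply ncard_swap (F := F) _ _ r
      · rintro x ⟨⟨⟨_, hxN⟩, hxP⟩, hxg⟩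
        have hm := g.add_mem hxg hr
        refine ⟨⟨⟨hg.1 _ hm, by simp [hxN, hrN]⟩, fun hc => ?_⟩, hm⟩
        exact hrx x hxg hxN (P.sub_mem hc hxP)
      · rintro x ⟨⟨⟨_, hxN⟩, hxP⟩, hxg⟩
        have hm := g.add_mem hxg hr
        refine ⟨⟨⟨hg.1 _ hm, by simp [hxN, hrN]⟩, ?_⟩, hm⟩
        have := hP2 _ _ (hrx x hxg hxN) hxP
        simpa [φ] using this
    have hdim : finrank F (g ⊓ LinearMap.ker (B N) : Submodule F V) + 1 = 2 * n := by
      have := aux_finrank_inf_ker g (B N) (by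
        intro m
        exact ⟨m • v, g.smul_mem _ hv, by simp [hS N v, hvN]⟩)
      rw [hg.2, finrank_self] at this
      exact this
    have hc0 : ((g ⊓ LinearMap.ker (B N) : Submodule F V) : Set V).ncard = q ^ (2 * n - 1) := by
      have h1 := Module.natCard_eq_pow_finrank (K := F)
        (V := (g ⊓ LinearMap.ker (B N) : Submodule F V))
      rw [Nat.card_eq_fintype_card (α := F), hq] at h1
      have h3 : finrank F (g ⊓ LinearMap.ker (B N) : Submodule F V) = 2 * n - 1 := by omega
      rw [h3] at h1
      exact h1
    have hun : (A₁ ∩ g) ∪ (A₂ ∩ g)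
        = (fun x => x + v) '' ((g ⊓ LinearMap.ker (B N) : Submodule F V) : Set V) := by
      ext x
      constructor
      · intro hx
        have hx' : x ∈ g ∧ B x N = 1 := by
          rcases hx with hx | hx
          · exact ⟨hx.2, hx.1.1.2⟩
          · exact ⟨hx.2, hx.1.1.2⟩
        refine ⟨x - v, ⟨g.sub_mem hx'.1 hv, ?_⟩, by simp⟩
        change B N (x - v) = 0
        simp [hS N, hx'.2, hvN]
      · rintro ⟨y, ⟨hy, hyN⟩, rfl⟩
        have hm := g.add_mem hy hv
        have hyN' : B N y = 0 := hyN
        have h5 : Q (y + v) = 0 ∧ B (y + v) N = 1 :=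
          ⟨hg.1 _ hm, by simp [hS y N, hyN', hvN]⟩
        by_cases hc : φ (y + v) ∈ P
        · exact Or.inl ⟨⟨h5, hc⟩, hm⟩
        · exact Or.inr ⟨⟨h5, hc⟩, hm⟩
    have hsum : (A₁ ∩ g).ncard + (A₂ ∩ g).ncard = q ^ (2 * n - 1) := by
      rw [← Set.ncard_union_eq, hun, Set.ncard_image_of_injective _ (add_left_injective v), hc0]
      rw [Set.disjoint_left]
      intro x hx hx'
      exact hx'.1.2 hx.1.2
    omega
  have hmo : ∀ A : Set V, (∀ x ∈ A, Q x = 0 ∧ B x N = 1) →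
      (∀ g : Submodule F V, IsGenerator Q (2 * n) g → ¬ g ≤ H →
        (A ∩ g).ncard = q ^ (2 * n - 1) / 2) →
      IsRelativeMOvoid Q (2 * n) H (q ^ (2 * n - 1) / 2) (s '' A) := by
    intro A hAX hAc
    refine ⟨?_, ?_⟩
    · rintro _ ⟨x, hx, rfl⟩
      exact hpt x (hAX x hx).1 (hAX x hx).2
    · intro g hg hgH
      rw [← hAc g hg hgH]
      have : {p ∈ s '' A | p ≤ g} = s '' (A ∩ g) := by
        ext p
        constructor
        · rintro ⟨⟨x, hx, rfl⟩, hle⟩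
          exact ⟨x, ⟨hx, hle (Submodule.mem_span_singleton_self x)⟩, rfl⟩
        · rintro ⟨x, ⟨hx, hxg⟩, rfl⟩
          exact ⟨⟨x, hx, rfl⟩, (Submodule.span_singleton_le_iff_mem x g).2 hxg⟩
      rw [this, Set.ncard_image_of_injOn]
      intro x hx y hy h
      exact hs x y (hAX x hx.1).2 (hAX y hy.1).2 h
  refine ⟨s '' A₁, s '' A₂, ?_, ?_, hmo A₁ (fun x hx => hx.1) (fun g hg h => (hcount g hg h).1),
    hmo A₂ (fun x hx => hx.1) (fun g hg h => (hcount g hg h).2), ?_⟩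
  · rw [Set.eq_empty_iff_forall_notMem]
    rintro _ ⟨⟨x, hx, rfl⟩, ⟨y, hy, hxy⟩⟩
    have := hs y x hy.1.2 hx.1.2 hxy
    subst this
    exact hy.2 hx.2
  · ext p
    constructor
    · rintro (⟨x, hx, rfl⟩ | ⟨x, hx, rfl⟩)
      · exact hpt x hx.1.1 hx.1.2
      · exact hpt x hx.1.1 hx.1.2
    · rintro ⟨h1, h3⟩
      obtain ⟨x, hx, hxN, rfl⟩ := hpt' p h1 h3
      by_cases hc : φ x ∈ P
      · exact Or.inl ⟨x, ⟨⟨hx, hxN⟩, hc⟩, rfl⟩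
      · exact Or.inr ⟨x, ⟨⟨hx, hxN⟩, hc⟩, rfl⟩
  · rw [Set.ncard_image_of_injOn hi₁, Set.ncard_image_of_injOn hi₂]
    have hφ : ∀ x, φ (x + N) = φ x + δ := by
      intro x
      simp only [φ, map_add, hJN, add_zero, LinearMap.add_apply, hS N v0, hv0]
      ring
    have hX : ∀ x, Q x = 0 ∧ B x N = 1 → Q (x + N) = 0 ∧ B (x + N) N = 1 := by
      rintro x ⟨h1, h3⟩
      refine ⟨?_, by simp [hA, h3]⟩
      rw [hQB, h1, h3, hN]
      linear_combination h2
    apply ncard_swap (F := F) _ _ N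
    · rintro x ⟨hx, hxP⟩
      refine ⟨hX x hx, fun hc => hδ ?_⟩
      rw [hφ] at hc
      exact (P.add_mem_cancel_left hxP).1 hc
    · rintro x ⟨hx, hxP⟩
      refine ⟨hX x hx, ?_⟩
      rw [hφ]
      exact hP2 _ _ hxP hδ
end
end

section
/- Let s ≠ t be elements of F such that the quadratic forms Q_s = Q + s·l² and Q_t = Q + t·l² both have Witt index n (so both define elliptic quadrics Q⁻(2n+1,q) whose singular points in H are exactly 𝒬). Let A be a relative hemisystem of the elliptic quadric defined by Q_s with respect to 𝒬, let A' be a relative hemisystem of the elliptic quadric defined by Q_t with respect to 𝒬, and set X = A ∪ A' ∪ 𝒬. Then every totally isotropic subspace of (V,B) of dimension n+1 (i.e. every maximal totally isotropic subspace of the symplectic space W(2n+1,q) defined by B) contains exactly (qⁿ − 1)/(q − 1) points of X; that is, X is a (qⁿ−1)/(q−1)-ovoid of W(2n+1,q). -/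
noncomputable section

open Module

variable {F V : Type*} [Field F] [AddCommGroup V] [Module F V]

/-- A relative hemisystem of the elliptic quadric defined by `Q'` with respect to the
parabolic section cut out by `H`: a relative `(q^{n−1}/2)`-ovoid whose size equals the
number of `Q'`-singular points outside `H` not belonging to it. -/
def IsRelHemisystemOf (Q' : QuadraticForm F V) (q n : ℕ) (H : Submodule F V)
    (R : Set (Submodule F V)) : Prop :=
  IsRelativeMOvoid Q' n H (q ^ (n - 1) / 2) R ∧
  R.ncard = {P : Submodule F V | IsSingularPoint Q' P ∧ ¬ P ≤ H ∧ P ∉ R}.ncard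

lemma ncard_points_aux [Finite F] (U : Submodule F V) (d : ℕ) (hd : finrank F U = d) :
    {P : Submodule F V | ∃ v : V, v ≠ 0 ∧ v ∈ U ∧ P = Submodule.span F {v}}.ncard
      = ∑ i ∈ Finset.range d, Nat.card F ^ i := by
  have hinj : Function.Injective
      (fun p : Projectivization F U => p.submodule.map U.subtype) := by
    intro a b h
    exact Projectivization.submodule_injective
      (Submodule.map_injective_of_injective U.injective_subtype h)
  rw [← Projectivization.card_of_finrank F U hd, ← Set.ncard_univ,
    ← Set.ncard_image_of_injective _ hinj]
  congr 1
  ext P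
  simp only [Set.mem_setOf_eq, Set.image_univ, Set.mem_range]
  constructor
  · rintro ⟨v, hv, hvU, rfl⟩
    refine ⟨Projectivization.mk F ⟨v, hvU⟩ (fun h => hv (congrArg Subtype.val h)), ?_⟩
    rw [Projectivization.submodule_mk, Submodule.map_span]
    simp
  · rintro ⟨p, rfl⟩
    refine ⟨p.rep, fun h => p.rep_nonzero (Subtype.ext h), p.rep.2, ?_⟩
    rw [Projectivization.submodule_eq, Submodule.map_span]
    simp

lemma singular_aux [Finite F] [CharP F 2] (n : ℕ) (Q : QuadraticForm F V) (W : Submodule F V)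
    (hW : ∀ x ∈ W, ∀ y ∈ W, Q (x + y) = Q x + Q y) (hdim : finrank F W = n + 1)
    (hQ : HasWittIndex Q n) :
    ∃ g : Submodule F V, IsGenerator Q n g ∧ ∀ v, v ∈ g ↔ v ∈ W ∧ Q v = 0 := by
  have : Module.Finite F W := Module.finite_of_finrank_pos (by omega)
  let φ : W →ₗ[F] F :=
    { toFun := fun w => (frobeniusEquiv F 2).symm (Q w)
      map_add' := fun x y => by
        rw [← map_add]
        exact congrArg _ (hW x x.2 y y.2)
      map_smul' := fun c x => by
        have : Q ((c • x : W) : V) = (frobeniusEquiv F 2) c * Q x := by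
          simp [QuadraticMap.map_smul, frobenius_def, pow_two]
        simp only [this, map_mul, RingEquiv.symm_apply_apply]
        simp }
  have hφ : ∀ w : W, φ w = 0 ↔ Q w = 0 := fun w => by
    change (frobeniusEquiv F 2).symm (Q w) = 0 ↔ _
    simp
  have hmem : ∀ v, v ∈ (LinearMap.ker φ).map W.subtype ↔ v ∈ W ∧ Q v = 0 := by
    intro v
    constructor
    · rintro ⟨w, hw, rfl⟩
      exact ⟨w.2, (hφ w).1 hw⟩
    · rintro ⟨h1, h2⟩
      exact ⟨⟨v, h1⟩, (hφ _).2 h2, rfl⟩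
  have hts : TotallySingular Q ((LinearMap.ker φ).map W.subtype) := fun v hv => ((hmem v).1 hv).2
  refine ⟨_, ⟨hts, ?_⟩, hmem⟩
  have h1 := hQ.1 _ hts
  have h2 := φ.finrank_range_add_finrank_ker
  have h3 : finrank F (LinearMap.range φ) ≤ 1 := by
    simpa using Submodule.finrank_le (LinearMap.range φ)
  have h4 : finrank F ((LinearMap.ker φ).map W.subtype) = finrank F (LinearMap.ker φ) :=
    LinearEquiv.finrank_eq (Submodule.equivMapOfInjective W.subtype W.injective_subtype _).symm
  omega

/-- Gluing relative hemisystems `A`, `A'` of two elliptic quadrics `Q_s`, `Q_t` of the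
pencil through `𝒬` together with `𝒬` itself yields a set `X` meeting every maximal
totally isotropic subspace of the symplectic space `W(2n+1,q)` defined by the common
polar form `B` in exactly `(qⁿ − 1)/(q − 1)` points: `X` is a
`(qⁿ−1)/(q−1)`-ovoid of `W(2n+1,q)`. -/
theorem statement_14
    (q n : ℕ) [Fintype F] (hq : Fintype.card F = q) (hq2 : Even q) (hn : 2 ≤ n)
    (hV : finrank F V = 2 * n + 2)
    (Q : QuadraticForm F V) (hQnd : Nondeg Q) (hQw : HasWittIndex Q n)
    (l : V →ₗ[F] F) (hl : l ≠ 0) (hHnd : NondegOn Q (LinearMap.ker l))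
    (s t : F) (hst : s ≠ t)
    (hWs : HasWittIndex (Q + s • QuadraticMap.linMulLin l l) n)
    (hWt : HasWittIndex (Q + t • QuadraticMap.linMulLin l l) n)
    (A Aa : Set (Submodule F V))
    (hA : IsRelHemisystemOf (Q + s • QuadraticMap.linMulLin l l) q n (LinearMap.ker l) A)
    (hAa : IsRelHemisystemOf (Q + t • QuadraticMap.linMulLin l l) q n (LinearMap.ker l) Aa)
    (X : Set (Submodule F V))
    (hX : X = A ∪ Aa ∪
      {P : Submodule F V | IsSingularPoint Q P ∧ P ≤ LinearMap.ker l}) :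
    ∀ W : Submodule F V, (∀ x ∈ W, ∀ y ∈ W, QuadraticMap.polar (⇑Q) x y = 0) →
      finrank F W = n + 1 →
      {P ∈ X | P ≤ W}.ncard = (q ^ n - 1) / (q - 1) := by
  intro W hW hWd
  have hFV : Module.Finite F V := Module.finite_of_finrank_pos (by omega)
  have : Finite V := Module.finite_of_finite F
  have : Finite (Submodule F V) :=
    Finite.of_injective (fun U : Submodule F V => (U : Set V)) SetLike.coe_injective
  have : CharP F 2 := by
    have h : ringChar F = 2 := by
      rw [FiniteField.even_card_iff_char_two, hq]
      exact Nat.even_iff.1 hq2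
    exact h ▸ ringChar.charP F
  have hcard : Nat.card F = q := by rw [Nat.card_eq_fintype_card, hq]
  have hq2' : 2 ≤ q := hq ▸ Fintype.one_lt_card
  have hval : ∀ (r : F) (v : V), (Q + r • QuadraticMap.linMulLin l l) v = Q v + r * (l v * l v) :=
    fun r v => by simp
  have hadd : ∀ r : F, ∀ x ∈ W, ∀ y ∈ W, (Q + r • QuadraticMap.linMulLin l l) (x + y) =
      (Q + r • QuadraticMap.linMulLin l l) x + (Q + r • QuadraticMap.linMulLin l l) y := by
    intro r x hx y hy
    have h := hW x hx y hy
    have h2 : (2 : F) = 0 := CharTwo.two_eq_zero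
    simp only [QuadraticMap.polar] at h
    simp only [hval, map_add]
    linear_combination h + r * l x * l y * h2
  obtain ⟨g, hg, hgm⟩ := singular_aux n _ W (hadd s) hWd hWs
  obtain ⟨g', hg', hgm'⟩ := singular_aux n _ W (hadd t) hWd hWt
  simp only [hval] at hgm hgm'
  -- points of a relative hemisystem inside W are those inside the generator
  have key : ∀ (r : F) (R : Set (Submodule F V)) (k : Submodule F V),
      IsRelHemisystemOf (Q + r • QuadraticMap.linMulLin l l) q n (LinearMap.ker l) R →
      (∀ v, v ∈ k ↔ v ∈ W ∧ Q v + r * (l v * l v) = 0) →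
      {P ∈ R | P ≤ W} = {P ∈ R | P ≤ k} := by
    intro r R k hR hk
    ext P
    simp only [Set.mem_setOf_eq, and_congr_right_iff]
    intro hP
    obtain ⟨⟨v, hv, hQv, rfl⟩, -⟩ := hR.1.1 P hP
    rw [hval] at hQv
    simp [Submodule.span_singleton_le_iff_mem, hk, hQv]
  have hmemi : ∀ v, v ∈ g ⊓ LinearMap.ker l ↔ v ∈ W ∧ Q v = 0 ∧ l v = 0 := by
    intro v
    simp only [Submodule.mem_inf, hgm, LinearMap.mem_ker]
    constructor
    · rintro ⟨⟨a, b⟩, c⟩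
      exact ⟨a, by simpa [c] using b, c⟩
    · rintro ⟨a, b, c⟩
      exact ⟨⟨a, by simp [b, c]⟩, c⟩
  have hpar : {P | (IsSingularPoint Q P ∧ P ≤ LinearMap.ker l) ∧ P ≤ W} =
      {P : Submodule F V | ∃ v : V, v ≠ 0 ∧ v ∈ g ⊓ LinearMap.ker l ∧
        P = Submodule.span F {v}} := by
    ext P
    simp only [Set.mem_setOf_eq, hmemi]
    constructor
    · rintro ⟨⟨⟨v, hv, hQv, rfl⟩, h1⟩, h2⟩
      rw [Submodule.span_singleton_le_iff_mem] at h1 h2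
      exact ⟨v, hv, ⟨h2, hQv, h1⟩, rfl⟩
    · rintro ⟨v, hv, ⟨h2, hQv, h1⟩, rfl⟩
      refine ⟨⟨⟨v, hv, hQv, rfl⟩, ?_⟩, ?_⟩ <;> rw [Submodule.span_singleton_le_iff_mem]
      · exact h1
      · exact h2
  have hsplit : {P ∈ X | P ≤ W} = ({P ∈ A | P ≤ W} ∪ {P ∈ Aa | P ≤ W}) ∪
      {P | (IsSingularPoint Q P ∧ P ≤ LinearMap.ker l) ∧ P ≤ W} := by
    subst hX
    ext P
    simp only [Set.mem_setOf_eq, Set.mem_union]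
    tauto
  rw [← Nat.geomSum_eq hq2', hsplit, key s A g hA hgm, key t Aa g' hAa hgm', hpar]
  have empt : ∀ (r : F) (R : Set (Submodule F V)) (k : Submodule F V),
      IsRelHemisystemOf (Q + r • QuadraticMap.linMulLin l l) q n (LinearMap.ker l) R →
      k ≤ LinearMap.ker l → {P ∈ R | P ≤ k} = ∅ := by
    intro r R k hR hk
    ext P
    simp only [Set.mem_setOf_eq, Set.mem_empty_iff_false, iff_false]
    rintro ⟨h1, h2⟩
    exact (hR.1.1 P h1).2 (h2.trans hk)
  by_cases hgl : g ≤ LinearMap.ker l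
  · have hle : g ≤ g' := by
      intro v hv
      have h0 : l v = 0 := hgl hv
      have h1 := (hgm v).1 hv
      rw [hgm']
      simpa [h0] using h1
    have heq : g = g' := Submodule.eq_of_le_of_finrank_eq hle (hg.2.trans hg'.2.symm)
    rw [empt s A g hA hgl, empt t Aa g' hAa (heq ▸ hgl), inf_eq_left.2 hgl, Set.empty_union,
      Set.empty_union, ncard_points_aux g n hg.2, hcard]
  · have hgl' : ¬ g' ≤ LinearMap.ker l := by
      intro h
      have hle : g' ≤ g := by
        intro v hv
        have h0 : l v = 0 := h hv
        have h1 := (hgm' v).1 hv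
        rw [hgm]
        simpa [h0] using h1
      have heq : g' = g := Submodule.eq_of_le_of_finrank_eq hle (hg'.2.trans hg.2.symm)
      exact hgl (heq ▸ h)
    have hdim : finrank F (g ⊓ LinearMap.ker l : Submodule F V) = n - 1 := by
      have hne : l ∘ₗ g.subtype ≠ 0 := by
        intro h
        apply hgl
        intro v hv
        exact LinearMap.congr_fun h ⟨v, hv⟩
      have hs := LinearMap.range_eq_top.2 (LinearMap.surjective hne)
      have h2 := (l ∘ₗ g.subtype).finrank_range_add_finrank_ker
      rw [hs, finrank_top, finrank_self, hg.2] at h2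
      have h3 : (LinearMap.ker (l ∘ₗ g.subtype)).map g.subtype = g ⊓ LinearMap.ker l := by
        rw [LinearMap.ker_comp, Submodule.map_comap_subtype]
      have h4 : finrank F ((LinearMap.ker (l ∘ₗ g.subtype)).map g.subtype) = _ :=
        LinearEquiv.finrank_eq
          (Submodule.equivMapOfInjective g.subtype g.injective_subtype _).symm
      rw [h3] at h4
      omega
    rw [Set.ncard_union_eq, Set.ncard_union_eq, hA.1.2 g hg hgl, hAa.1.2 g' hg' hgl',
      ncard_points_aux _ _ hdim, hcard]
    · obtain ⟨m, rfl⟩ : ∃ m, n = m + 1 := ⟨n - 1, by omega⟩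
      have hev : Even (q ^ m) := hq2.pow_of_ne_zero (by omega)
      rw [Finset.sum_range_succ]
      simp only [Nat.add_sub_cancel]
      have := Nat.div_mul_cancel hev.two_dvd
      omega
    · rw [Set.disjoint_left]
      rintro P ⟨hP, h1⟩ ⟨hP', h2⟩
      obtain ⟨⟨v, hv, hQv, rfl⟩, hH⟩ := hA.1.1 P hP
      rw [Submodule.span_singleton_le_iff_mem] at h1 h2 hH
      have e1 := ((hgm v).1 h1).2
      have e2 := ((hgm' v).1 h2).2
      have e3 : (s - t) * (l v * l v) = 0 := by linear_combination e1 - e2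
      apply hH
      rcases mul_eq_zero.1 e3 with h | h
      · exact absurd (sub_eq_zero.1 h) hst
      · exact mul_self_eq_zero.1 h
    · rw [Set.disjoint_left]
      rintro P hP ⟨v, hv, hvm, rfl⟩
      have hH : Submodule.span F {v} ≤ LinearMap.ker l :=
        (Submodule.span_singleton_le_iff_mem _ _).2 hvm.2
      rcases hP with ⟨h, -⟩ | ⟨h, -⟩
      · exact (hA.1.1 _ h).2 hH
      · exact (hAa.1.1 _ h).2 hH
end
end
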